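/- arXiv:1405.0392 — 13 statements merged into one kernel-verified Lean document; each statement's English description precedes it below -/
import Mathlib

section
/- Let n ≥ 6 be an integer and let G be a simple graph on n vertices such that every vertex u of G satisfies 2 ≤ d(u) ≤ n − 4 and the sum of the degrees of the neighbors of u satisfies Σ_{v∼u} d(v) ≤ n + 3·d(u) − 4. Then the Q-index of G satisfies q(G) ≤ n. -/
open Matrix

/-- The signless Laplacian `Q(G) = D(G) + A(G)` of a finite simple graph `G`. -/
noncomputable def signlessLaplacian {V : Type*} [Fintype V] (G : SimpleGraph V) :
    Matrix V V ℝ :=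
  letI := Classical.decEq V
  letI : DecidableRel G.Adj := Classical.decRel _
  Matrix.diagonal (fun v => (G.degree v : ℝ)) + G.adjMatrix ℝ

/-- The `Q`-index of `G`: the largest eigenvalue of the signless Laplacian `Q(G)`. -/
noncomputable def qIndex {V : Type*} [Fintype V] (G : SimpleGraph V) : ℝ :=
  letI := Classical.decEq V
  sSup (spectrum ℝ (signlessLaplacian G))

theorem signlessLaplacian_mulVec {V : Type*} [Fintype V] (G : SimpleGraph V)
    [DecidableRel G.Adj] (x : V → ℝ) (u : V) :
    (signlessLaplacian G *ᵥ x) u = (G.degree u : ℝ) * x u + ∑ v ∈ G.neighborFinset u, x v := by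
  classical
  unfold signlessLaplacian
  rw [Matrix.add_mulVec, Pi.add_apply, Matrix.mulVec_diagonal, SimpleGraph.adjMatrix_mulVec_apply]
  congr!

theorem exists_eigenvector_of_mem_spectrum {V : Type*} [Fintype V] [DecidableEq V]
    (M : Matrix V V ℝ) (l : ℝ) (hl : l ∈ spectrum ℝ M) : ∃ x, x ≠ 0 ∧ M *ᵥ x = l • x := by
  rw [← Matrix.spectrum_toLin', ← Module.End.hasEigenvalue_iff_mem_spectrum] at hl
  obtain ⟨x, hx⟩ := hl.exists_hasEigenvector
  have := hx.apply_eq_smul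
  rw [Matrix.toLin'_apply] at this
  exact ⟨x, hx.2, this⟩

/-- If `n ≥ 6` and every vertex `u` of `G` satisfies `2 ≤ d(u) ≤ n - 4` and
`∑_{v∼u} d(v) ≤ n + 3 d(u) - 4`, then `q(G) ≤ n`. -/
theorem stmt_0 (n : ℕ) (hn : 6 ≤ n) (G : SimpleGraph (Fin n)) [DecidableRel G.Adj]
    (hdeg : ∀ u, 2 ≤ G.degree u ∧ G.degree u ≤ n - 4)
    (hsum : ∀ u, ∑ v ∈ G.neighborFinset u, G.degree v ≤ n + 3 * G.degree u - 4) :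
    qIndex G ≤ n := by
  classical
  unfold qIndex
  apply Real.sSup_le _ (Nat.cast_nonneg n)
  intro l hl
  obtain ⟨x, hx0, hQ⟩ :=
    @exists_eigenvector_of_mem_spectrum _ _ (Classical.decEq _) _ _ hl
  have hd : ∀ u, (2 : ℝ) ≤ G.degree u := fun u => by exact_mod_cast (hdeg u).1
  have : Nonempty (Fin n) := ⟨⟨0, by omega⟩⟩
  obtain ⟨u, hu⟩ := Finite.exists_max (fun v => |x v| / (G.degree v : ℝ))
  set y := |x u| / (G.degree u : ℝ) with hy
  have hle : ∀ v, |x v| ≤ y * G.degree v := fun v =>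
    (div_le_iff₀ (by linarith [hd v])).1 (hu v)
  have hxu : |x u| = y * G.degree u := by
    rw [hy, div_mul_cancel₀]
    linarith [hd u]
  have hypos : 0 < y := by
    by_contra! h
    apply hx0
    funext v
    have h1 := hle v
    have h2 : y * G.degree v ≤ 0 := mul_nonpos_of_nonpos_of_nonneg h (by positivity)
    exact abs_eq_zero.1 (le_antisymm (h1.trans h2) (abs_nonneg _))
  have he := congrFun hQ u
  rw [signlessLaplacian_mulVec, Pi.smul_apply, smul_eq_mul] at he
  have h1 : (l - G.degree u) * x u = ∑ v ∈ G.neighborFinset u, x v := by linarith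
  have h2 : (l - G.degree u) * |x u| ≤ ∑ v ∈ G.neighborFinset u, |x v| := by
    calc (l - G.degree u) * |x u| ≤ |l - G.degree u| * |x u| :=
          mul_le_mul_of_nonneg_right (le_abs_self _) (abs_nonneg _)
      _ = |∑ v ∈ G.neighborFinset u, x v| := by rw [← abs_mul, h1]
      _ ≤ _ := Finset.abs_sum_le_sum_abs _ _
  have h3 : ∑ v ∈ G.neighborFinset u, |x v| ≤ y * ∑ v ∈ G.neighborFinset u, (G.degree v : ℝ) := by
    rw [Finset.mul_sum]
    exact Finset.sum_le_sum fun v _ => hle v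
  have h4 : ∑ v ∈ G.neighborFinset u, (G.degree v : ℝ) ≤ n + 3 * G.degree u - 4 := by
    have h : ∑ v ∈ G.neighborFinset u, G.degree v + 4 ≤ n + 3 * G.degree u := by
      have := hsum u
      omega
    have h' : (∑ v ∈ G.neighborFinset u, (G.degree v : ℝ)) + 4 ≤ n + 3 * G.degree u := by
      exact_mod_cast h
    linarith
  have h5 : (G.degree u : ℝ) + 4 ≤ n := by
    have := (hdeg u).2
    exact_mod_cast (by omega : G.degree u + 4 ≤ n)
  have h6 : (l - G.degree u) * G.degree u ≤ n + 3 * G.degree u - 4 := by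
    refine le_of_mul_le_mul_left ?_ hypos
    have h7 := mul_le_mul_of_nonneg_left h4 hypos.le
    rw [hxu] at h2
    linarith
  have h8 := hd u
  by_contra! hlt
  nlinarith [mul_pos (sub_pos.2 hlt) (by linarith : (0 : ℝ) < G.degree u),
    mul_nonneg (by linarith : (0 : ℝ) ≤ (G.degree u : ℝ) - 1)
      (by linarith : (0 : ℝ) ≤ n - 4 - (G.degree u : ℝ))]
end

section
/- Let G be a finite simple graph, let q(G) be its Q-index, and let x be a unit eigenvector of Q(G) with eigenvalue q(G) all of whose entries are nonnegative. Suppose c and d are adjacent vertices of G, and a and b are distinct non-adjacent vertices of G, with x_a + x_b > x_c + x_d. Let F be the graph obtained from G by deleting the edge cd and adding the edge ab. Then q(F) > q(G). -/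
open Matrix

lemma quad_le_sSup {V : Type*} [Fintype V] [DecidableEq V] (M : Matrix V V ℝ)
    (hM : M.IsHermitian) (x : V → ℝ) :
    x ⬝ᵥ (M *ᵥ x) ≤ sSup (spectrum ℝ M) * (x ⬝ᵥ x) := by
  set q := sSup (spectrum ℝ M) with hq
  have hH : (algebraMap ℝ (Matrix V V ℝ) q - M).IsHermitian := by
    refine Matrix.IsHermitian.sub ?_ hM
    rw [Matrix.algebraMap_eq_diagonal]
    exact Matrix.isHermitian_diagonal _
  have hP : (algebraMap ℝ (Matrix V V ℝ) q - M).PosSemidef := by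
    rw [hH.posSemidef_iff_eigenvalues_nonneg]
    intro i
    have h1 := hH.eigenvalues_mem_spectrum_real i
    rw [← spectrum.singleton_sub_eq] at h1
    obtain ⟨y, hy, z, hz, hyz⟩ := Set.mem_sub.1 h1
    have hle : z ≤ q := le_csSup (Matrix.finite_real_spectrum (A := M)).bddAbove hz
    simp only [Set.mem_singleton_iff] at hy
    simp only [Pi.zero_apply]
    linarith
  have h := hP.dotProduct_mulVec_nonneg x
  rw [Matrix.sub_mulVec, dotProduct_sub, Algebra.algebraMap_eq_smul_one, Matrix.smul_mulVec,
    Matrix.one_mulVec, dotProduct_smul] at h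
  simp only [star_trivial, smul_eq_mul] at h
  linarith

open Classical in
lemma signless_quad {V : Type*} [Fintype V] (G : SimpleGraph V) (x : V → ℝ) :
    x ⬝ᵥ (signlessLaplacian G *ᵥ x) =
      ∑ v, ∑ w, (if G.Adj v w then (1 : ℝ) else 0) * (x v ^ 2 + x v * x w) := by
  unfold signlessLaplacian
  rw [Matrix.add_mulVec, dotProduct_add]
  simp only [dotProduct, ← Finset.sum_add_distrib]
  refine Finset.sum_congr rfl fun v _ => ?_
  rw [Matrix.mulVec_diagonal]
  have hdeg : (G.degree v : ℝ) = ∑ w, (if G.Adj v w then (1 : ℝ) else 0) := by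
    rw [Finset.sum_boole, ← SimpleGraph.card_neighborFinset_eq_degree,
      SimpleGraph.neighborFinset_eq_filter]
  have hd2 : x v * ((G.degree v : ℝ) * x v)
      = ∑ w, (if G.Adj v w then (1 : ℝ) else 0) * x v ^ 2 := by
    rw [hdeg, ← Finset.sum_mul]; ring
  simp only [mul_add, Finset.sum_add_distrib]
  rw [← hd2]
  congr 1
  · simp only [Matrix.mulVec, dotProduct, Finset.mul_sum, SimpleGraph.adjMatrix_apply]
    refine Finset.sum_congr rfl fun w _ => ?_
    split_ifs <;> ring

lemma signless_quad_dec {V : Type*} [Fintype V] (G : SimpleGraph V) [DecidableRel G.Adj]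
    (x : V → ℝ) :
    x ⬝ᵥ (signlessLaplacian G *ᵥ x) =
      ∑ v, ∑ w, (if G.Adj v w then (1 : ℝ) else 0) * (x v ^ 2 + x v * x w) := by
  rw [signless_quad]
  congr!

lemma signless_herm {V : Type*} [Fintype V] (G : SimpleGraph V) :
    (signlessLaplacian G).IsHermitian := by
  classical
  unfold signlessLaplacian
  refine Matrix.IsHermitian.add (Matrix.isHermitian_diagonal _) ?_
  ext i j
  simp [Matrix.conjTranspose_apply, SimpleGraph.adjMatrix_apply, SimpleGraph.adj_comm]

lemma qIndex_ge {V : Type*} [Fintype V] (G : SimpleGraph V) (x : V → ℝ)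
    (h1 : x ⬝ᵥ x = 1) : x ⬝ᵥ (signlessLaplacian G *ᵥ x) ≤ qIndex G := by
  let _ := Classical.decEq V
  have := quad_le_sSup (signlessLaplacian G) (signless_herm G) x
  rw [h1, mul_one] at this
  exact this

lemma sum_pair {V : Type*} [Fintype V] [DecidableEq V] (f : V → V → ℝ) (a b : V) :
    ∑ v, ∑ w, (if v = a ∧ w = b then (1 : ℝ) else 0) * f v w = f a b := by
  rw [Finset.sum_eq_single a, Finset.sum_eq_single b]
  · simp
  · intro w _ hw; simp [hw]
  · simp
  · intro v _ hv; simp [hv]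
  · simp

/-- rotating an edge towards a pair of vertices with larger eigenvector-entry sum
strictly increases the `Q`-index. -/
theorem stmt_1 {V : Type*} [Fintype V] [DecidableEq V] (G : SimpleGraph V)
    (x : V → ℝ) (hunit : ∑ v, x v ^ 2 = 1) (hnonneg : ∀ v, 0 ≤ x v)
    (heig : (signlessLaplacian G).mulVec x = qIndex G • x)
    (c d a b : V) (hcd : G.Adj c d) (hab : a ≠ b) (hnadj : ¬ G.Adj a b)
    (hx : x c + x d < x a + x b) :
    qIndex G <
      qIndex (SimpleGraph.fromEdgeSet ((G.edgeSet \ {s(c, d)}) ∪ {s(a, b)})) := by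
  classical
  set F := SimpleGraph.fromEdgeSet ((G.edgeSet \ {s(c, d)}) ∪ {s(a, b)}) with hF
  have h1 : x ⬝ᵥ x = 1 := by
    rw [← hunit]; simp only [dotProduct, pow_two]
  have hG : x ⬝ᵥ (signlessLaplacian G *ᵥ x) = qIndex G := by
    rw [heig, dotProduct_smul, h1]; simp
  refine lt_of_lt_of_le ?_ (qIndex_ge F x h1)
  rw [← hG, signless_quad_dec, signless_quad_dec]
  have hcd' : c ≠ d := hcd.ne
  have hind : ∀ v w, (if F.Adj v w then (1 : ℝ) else 0) =
      (if G.Adj v w then (1 : ℝ) else 0)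
      - (if v = c ∧ w = d then (1 : ℝ) else 0) - (if v = d ∧ w = c then (1 : ℝ) else 0)
      + (if v = a ∧ w = b then (1 : ℝ) else 0) + (if v = b ∧ w = a then (1 : ℝ) else 0) := by
    intro v w
    have hFa : F.Adj v w ↔ ((G.Adj v w ∧ ¬ ((v = c ∧ w = d) ∨ (v = d ∧ w = c))) ∨
        ((v = a ∧ w = b) ∨ (v = b ∧ w = a))) ∧ v ≠ w := by
      simp only [hF, SimpleGraph.fromEdgeSet_adj, Set.mem_union, Set.mem_sdiff,
        SimpleGraph.mem_edgeSet, Set.mem_singleton_iff, Sym2.eq_iff]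
    by_cases e1 : v = a ∧ w = b
    · obtain ⟨rfl, rfl⟩ := e1
      have n1 : ¬ (v = c ∧ w = d) := by rintro ⟨rfl, rfl⟩; exact hnadj hcd
      have n2 : ¬ (v = d ∧ w = c) := by rintro ⟨rfl, rfl⟩; exact hnadj hcd.symm
      have n3 : ¬ (v = w ∧ w = v) := fun h => hab h.1
      rw [if_pos (hFa.2 ⟨Or.inr (Or.inl ⟨rfl, rfl⟩), hab⟩), if_neg hnadj, if_neg n1, if_neg n2,
        if_neg n3, if_pos ⟨rfl, rfl⟩]
      norm_num
    by_cases e2 : v = b ∧ w = a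
    · obtain ⟨rfl, rfl⟩ := e2
      have hn : ¬ G.Adj v w := fun h => hnadj h.symm
      have n1 : ¬ (v = c ∧ w = d) := by rintro ⟨rfl, rfl⟩; exact hn hcd
      have n2 : ¬ (v = d ∧ w = c) := by rintro ⟨rfl, rfl⟩; exact hn hcd.symm
      rw [if_pos (hFa.2 ⟨Or.inr (Or.inr ⟨rfl, rfl⟩), hab.symm⟩), if_neg hn, if_neg n1, if_neg n2,
        if_neg e1, if_pos ⟨rfl, rfl⟩]
      norm_num
    rw [if_neg e1, if_neg e2]
    by_cases e3 : v = c ∧ w = d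
    · have n : ¬ (v = d ∧ w = c) := fun h => hcd' (e3.1.symm.trans h.1)
      have nF : ¬ F.Adj v w := by
        rw [hFa]
        rintro ⟨⟨_, h⟩ | h | h, _⟩
        · exact h (by first | exact Or.inl e3 | exact Or.inr e4)
        · exact e1 h
        · exact e2 h
      have g : G.Adj v w := by rw [e3.1, e3.2]; exact hcd
      rw [if_neg nF, if_pos g, if_pos e3, if_neg n]; norm_num
    by_cases e4 : v = d ∧ w = c
    · have nF : ¬ F.Adj v w := by
        rw [hFa]
        rintro ⟨⟨_, h⟩ | h | h, _⟩
        · exact h (by first | exact Or.inl e3 | exact Or.inr e4)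
        · exact e1 h
        · exact e2 h
      have g : G.Adj v w := by rw [e4.1, e4.2]; exact hcd.symm
      rw [if_neg nF, if_pos g, if_neg e3, if_pos e4]; norm_num
    have hiff : F.Adj v w ↔ G.Adj v w := by
      rw [hFa]
      simp only [e1, e2, e3, e4, or_self, not_false_eq_true, and_true, or_false]
      exact ⟨And.left, fun h => ⟨h, h.ne⟩⟩
    simp only [hiff, if_neg e3, if_neg e4]; ring
  simp only [hind]
  simp only [add_mul, sub_mul, Finset.sum_add_distrib, Finset.sum_sub_distrib]
  rw [sum_pair (fun v w => x v ^ 2 + x v * x w), sum_pair (fun v w => x v ^ 2 + x v * x w),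
    sum_pair (fun v w => x v ^ 2 + x v * x w), sum_pair (fun v w => x v ^ 2 + x v * x w)]
  nlinarith [hnonneg a, hnonneg b, hnonneg c, hnonneg d]
end

section
/- Under the stated hypotheses on G, the eigenvector x satisfies x_k > x_0. -/
open Matrix

/-- Entrywise action of the signless Laplacian. -/
theorem signlessLaplacian_apply {n : ℕ} (G : SimpleGraph (Fin n)) (x : Fin n → ℝ) (v : Fin n)
    (N : Finset (Fin n)) (hN : G.neighborSet v = (N : Set (Fin n))) :
    (signlessLaplacian G).mulVec x v = ∑ u ∈ N, (x v + x u) := by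
  classical
  have hf : G.neighborFinset v = N := by
    ext u
    rw [SimpleGraph.mem_neighborFinset, ← SimpleGraph.mem_neighborSet, hN, Finset.mem_coe]
  rw [Finset.sum_add_distrib, Finset.sum_const, nsmul_eq_mul, ← hf,
    SimpleGraph.card_neighborFinset_eq_degree]
  have key : signlessLaplacian G =
      Matrix.diagonal (fun v => (G.degree v : ℝ)) + G.adjMatrix ℝ := by
    unfold signlessLaplacian
    congr!
  rw [key, Matrix.add_mulVec, Pi.add_apply, Matrix.mulVec_diagonal, SimpleGraph.adjMatrix_mulVec_apply]

/-- for the maximal outer-planar graph with `Δ = n - 2`,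
the Perron eigenvector satisfies `x_k > x_0`. -/
theorem stmt_2 (n k : ℕ) (hn : 6 ≤ n) (hk1 : 3 ≤ k) (hk2 : k ≤ n - 3)
    (G : SimpleGraph (Fin n))
    (h0 : G.neighborSet ⟨0, by omega⟩ = {⟨1, by omega⟩, ⟨n - 1, by omega⟩})
    (hk' : G.neighborSet ⟨k, by omega⟩ =
      {u : Fin n | u ≠ ⟨0, by omega⟩ ∧ u ≠ ⟨k, by omega⟩})
    (h1 : G.neighborSet ⟨1, by omega⟩ =
      {⟨0, by omega⟩, ⟨2, by omega⟩, ⟨k, by omega⟩, ⟨n - 1, by omega⟩})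
    (hlast : G.neighborSet ⟨n - 1, by omega⟩ =
      {⟨0, by omega⟩, ⟨1, by omega⟩, ⟨k, by omega⟩, ⟨n - 2, by omega⟩})
    (x : Fin n → ℝ) (hpos : ∀ i, 0 < x i)
    (heig : (signlessLaplacian G).mulVec x = qIndex G • x) :
    x ⟨0, by omega⟩ < x ⟨k, by omega⟩ := by
  classical
  have e0 := congrFun heig ⟨0, by omega⟩
  have ek := congrFun heig ⟨k, by omega⟩
  rw [signlessLaplacian_apply G x _ {⟨1, by omega⟩, ⟨n - 1, by omega⟩} (by rw [h0]; simp),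
    Finset.sum_pair (by simp; omega), Pi.smul_apply, smul_eq_mul] at e0
  rw [signlessLaplacian_apply G x _
    (Finset.univ.filter fun u : Fin n => u ≠ ⟨0, by omega⟩ ∧ u ≠ ⟨k, by omega⟩)
    (by rw [hk']; simp), Pi.smul_apply, smul_eq_mul] at ek
  have hsub : ({⟨1, by omega⟩, ⟨2, by omega⟩, ⟨n - 1, by omega⟩} : Finset (Fin n)) ⊆
      Finset.univ.filter fun u : Fin n => u ≠ ⟨0, by omega⟩ ∧ u ≠ ⟨k, by omega⟩ := by
    intro u hu
    simp only [Finset.mem_insert, Finset.mem_singleton, Finset.mem_filter, Finset.mem_univ,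
      true_and, ne_eq, Fin.ext_iff] at hu ⊢
    omega
  have hle := Finset.sum_le_sum_of_subset_of_nonneg (f := fun u => x ⟨k, by omega⟩ + x u) hsub
    (fun u _ _ => (add_pos (hpos _) (hpos u)).le)
  rw [ek, Finset.sum_insert (by simp; omega), Finset.sum_pair (by simp; omega)] at hle
  have p1 := hpos ⟨1, by omega⟩
  have p2 := hpos ⟨2, by omega⟩
  have pl := hpos ⟨n - 1, by omega⟩
  have pk := hpos ⟨k, by omega⟩
  have p0 := hpos ⟨0, by omega⟩
  generalize qIndex G = q at *
  by_contra! hcon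
  have hq : 3 < q := by
    by_contra! hq
    nlinarith [mul_le_mul_of_nonneg_right hq pk.le]
  nlinarith [mul_le_mul_of_nonneg_left hcon (sub_pos.2 hq).le]
end

section
/- Under the stated hypotheses on G, if n ≥ 10 then the eigenvector x satisfies x_k + x_0 > x_1 + x_{n−1}. -/
open Matrix

theorem sl_mulVec {V : Type*} [Fintype V] (G : SimpleGraph V) (x : V → ℝ) (v : V)
    (S : Finset V) (hS : G.neighborSet v = (S : Set V)) :
    (signlessLaplacian G).mulVec x v = (S.card : ℝ) * x v + ∑ u ∈ S, x u := by
  classical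
  have hN : ∀ [DecidableRel G.Adj], G.neighborFinset v = S := by
    intro _
    ext u
    rw [SimpleGraph.mem_neighborFinset, ← SimpleGraph.mem_neighborSet, hS, Finset.mem_coe]
  unfold signlessLaplacian
  simp only [Matrix.add_mulVec, Pi.add_apply, Matrix.mulVec_diagonal,
    SimpleGraph.adjMatrix_mulVec_apply, ← SimpleGraph.card_neighborFinset_eq_degree]
  rw [hN]

theorem sl_final (q N y z a b : ℝ) (hN : 10 ≤ N) (hy : 0 < y) (hz : 0 < z) (ha : 0 < a)
    (hb : 0 < b) (e0 : 2 * z + a = q * z) (e1 : 4 * a + (2 * z + b + 2 * y + a) = q * a)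
    (e2 : (N - 2) * y + (a + b) ≤ q * y) : a < y + z := by
  have hq : N - 2 < q := by
    by_contra h
    push Not at h
    nlinarith [mul_le_mul_of_nonneg_right h hy.le]
  have haz : a = (q - 2) * z := by linarith
  by_contra h
  push Not at h
  have h1 : y ≤ (q - 3) * z := by rw [haz] at h; linarith
  have h2 : (q - 4) * a ≤ 2 * z + (q - N + 4) * y := by linarith
  have h3 : (q - N + 4) * y ≤ (q - N + 4) * ((q - 3) * z) :=
    mul_le_mul_of_nonneg_left h1 (by linarith)
  rw [haz] at h2
  have h4 : 0 ≤ (2 + (q - N + 4) * (q - 3) - (q - 4) * (q - 2)) * z := by linarith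
  have h5 : 2 + (q - N + 4) * (q - 3) - (q - 4) * (q - 2) < 0 := by nlinarith
  nlinarith

/-- for the maximal outer-planar graph with `Δ = n - 2`, if `n ≥ 10` then
the Perron eigenvector satisfies `x_k + x_0 > x_1 + x_{n-1}`. -/
theorem stmt_3 (n k : ℕ) (hn : 6 ≤ n) (hk1 : 3 ≤ k) (hk2 : k ≤ n - 3)
    (G : SimpleGraph (Fin n))
    (h0 : G.neighborSet ⟨0, by omega⟩ = {⟨1, by omega⟩, ⟨n - 1, by omega⟩})
    (hk' : G.neighborSet ⟨k, by omega⟩ =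
      {u : Fin n | u ≠ ⟨0, by omega⟩ ∧ u ≠ ⟨k, by omega⟩})
    (h1 : G.neighborSet ⟨1, by omega⟩ =
      {⟨0, by omega⟩, ⟨2, by omega⟩, ⟨k, by omega⟩, ⟨n - 1, by omega⟩})
    (hlast : G.neighborSet ⟨n - 1, by omega⟩ =
      {⟨0, by omega⟩, ⟨1, by omega⟩, ⟨k, by omega⟩, ⟨n - 2, by omega⟩})
    (x : Fin n → ℝ) (hpos : ∀ i, 0 < x i)
    (heig : (signlessLaplacian G).mulVec x = qIndex G • x)
    (hn10 : 10 ≤ n) :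
    x ⟨1, by omega⟩ + x ⟨n - 1, by omega⟩ < x ⟨k, by omega⟩ + x ⟨0, by omega⟩ := by
  have E0 := congrFun heig ⟨0, by omega⟩
  have E1 := congrFun heig ⟨1, by omega⟩
  have EL := congrFun heig ⟨n - 1, by omega⟩
  have Ek := congrFun heig ⟨k, by omega⟩
  rw [sl_mulVec G x _ {⟨1, by omega⟩, ⟨n - 1, by omega⟩} (by rw [h0]; simp)] at E0
  rw [sl_mulVec G x _ {⟨0, by omega⟩, ⟨2, by omega⟩, ⟨k, by omega⟩, ⟨n - 1, by omega⟩}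
    (by rw [h1]; simp)] at E1
  rw [sl_mulVec G x _ {⟨0, by omega⟩, ⟨1, by omega⟩, ⟨k, by omega⟩, ⟨n - 2, by omega⟩}
    (by rw [hlast]; simp)] at EL
  rw [sl_mulVec G x _ (Finset.univ \ {⟨0, by omega⟩, ⟨k, by omega⟩})
    (by rw [hk']; ext u; simp)] at Ek
  have hsub : ({⟨1, by omega⟩, ⟨n - 1, by omega⟩, ⟨2, by omega⟩, ⟨n - 2, by omega⟩} :
      Finset (Fin n)) ⊆ Finset.univ \ {⟨0, by omega⟩, ⟨k, by omega⟩} := by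
    intro u hu
    simp only [Finset.mem_insert, Finset.mem_singleton, Finset.mem_sdiff, Finset.mem_univ,
      true_and, Fin.ext_iff] at hu ⊢
    omega
  have hle := Finset.sum_le_sum_of_subset_of_nonneg (f := x) hsub (fun i _ _ => (hpos i).le)
  have hcard : ((Finset.univ \ {⟨0, by omega⟩, ⟨k, by omega⟩} : Finset (Fin n)).card : ℝ)
      = (n : ℝ) - 2 := by
    rw [Finset.card_sdiff_of_subset (Finset.subset_univ _), Finset.card_pair
      (by simp only [ne_eq, Fin.mk.injEq]; omega), Finset.card_univ, Fintype.card_fin,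
      Nat.cast_sub (by omega)]
    norm_num
  rw [hcard] at Ek
  have n1 : (1 : ℕ) ≠ n - 1 := by omega
  have n2 : (0 : ℕ) ≠ n - 1 := by omega
  have n3 : (2 : ℕ) ≠ n - 1 := by omega
  have n4 : k ≠ n - 1 := by omega
  have n5 : (0 : ℕ) ≠ k := by omega
  have n6 : (2 : ℕ) ≠ k := by omega
  have n7 : (1 : ℕ) ≠ k := by omega
  have n8 : (0 : ℕ) ≠ n - 2 := by omega
  have n9 : (1 : ℕ) ≠ n - 2 := by omega
  have n10 : k ≠ n - 2 := by omega
  have n11 : n - 1 ≠ n - 2 := by omega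
  have n12 : (2 : ℕ) ≠ n - 2 := by omega
  have n13 : n - 1 ≠ 2 := by omega
  have m1 : (0 : ℕ) ≠ 1 := by omega
  have m2 : (0 : ℕ) ≠ 2 := by omega
  have m3 : (1 : ℕ) ≠ 2 := by omega
  simp only [Finset.mem_insert, Finset.mem_singleton, Fin.mk.injEq, n1, n2, n3, n4, n5, n6, n7,
    n8, n9, n10, n11, n12, n13, m1, m2, m3, or_self, not_false_eq_true, Finset.sum_insert,
    Finset.card_insert_of_notMem, Finset.sum_singleton, Finset.card_singleton,
    Pi.smul_apply, smul_eq_mul] at E0 E1 EL Ek hle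
  norm_num at E0 E1 EL
  have hN : (10 : ℝ) ≤ n := by exact_mod_cast hn10
  have p0 := hpos ⟨0, by omega⟩
  have p1 := hpos ⟨1, by omega⟩
  have p2 := hpos ⟨2, by omega⟩
  have pk := hpos ⟨k, by omega⟩
  have pl := hpos ⟨n - 1, by omega⟩
  have pm := hpos ⟨n - 2, by omega⟩
  exact sl_final (qIndex G) n _ _ _ (x ⟨2, by omega⟩ + x ⟨n - 2, by omega⟩) hN pk p0
    (add_pos p1 pl) (add_pos p2 pm) (by linarith) (by linarith) (by linarith)
end

section
/- Under the stated hypotheses on G, if n ≥ 10 then the graph F obtained from G by deleting the edge v_1v_{n−1} and adding the edge v_0v_k satisfies q(F) > q(G). -/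
open Matrix

section helpers

variable {V : Type*} [Fintype V]

open Classical in
theorem slq_mulVec (G : SimpleGraph V) (x : V → ℝ) (i : V) :
    (signlessLaplacian G *ᵥ x) i = ∑ j ∈ Finset.univ.filter (fun j => G.Adj i j), (x i + x j) := by
  unfold signlessLaplacian
  rw [Matrix.add_mulVec, Pi.add_apply, Matrix.mulVec_diagonal, Finset.sum_add_distrib]
  congr 1
  · rw [Finset.sum_const, nsmul_eq_mul]
    congr 2
    rw [← SimpleGraph.card_neighborFinset_eq_degree]
    congr 1
    ext j
    simp
  · simp only [Matrix.mulVec, dotProduct, SimpleGraph.adjMatrix_apply, ite_mul, one_mul, zero_mul]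
    rw [Finset.sum_filter]

open Classical in
theorem slq_mulVec' (G : SimpleGraph V) (x : V → ℝ) (i : V) :
    (signlessLaplacian G *ᵥ x) i = ∑ j, if G.Adj i j then (x i + x j) else 0 := by
  rw [slq_mulVec, Finset.sum_filter]

open Classical in
theorem slq_quad (G : SimpleGraph V) (x : V → ℝ) :
    2 * (x ⬝ᵥ (signlessLaplacian G *ᵥ x)) =
      ∑ i, ∑ j, (if G.Adj i j then (1:ℝ) else 0) * (x i + x j) ^ 2 := by
  have h1 : x ⬝ᵥ (signlessLaplacian G *ᵥ x) =
      ∑ i, ∑ j, (if G.Adj i j then (1:ℝ) else 0) * (x i * (x i + x j)) := by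
    simp only [dotProduct, slq_mulVec', Finset.mul_sum]
    refine Finset.sum_congr rfl fun i _ => Finset.sum_congr rfl fun j _ => ?_
    split_ifs <;> ring
  have h2 : x ⬝ᵥ (signlessLaplacian G *ᵥ x) =
      ∑ i, ∑ j, (if G.Adj i j then (1:ℝ) else 0) * (x j * (x i + x j)) := by
    rw [h1, Finset.sum_comm]
    refine Finset.sum_congr rfl fun i _ => Finset.sum_congr rfl fun j _ => ?_
    simp only [G.adj_comm i j]
    ring
  rw [two_mul]
  nth_rewrite 1 [h1]
  rw [h2]
  simp only [← Finset.sum_add_distrib]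
  refine Finset.sum_congr rfl fun i _ => Finset.sum_congr rfl fun j _ => ?_
  ring

theorem slq_herm (G : SimpleGraph V) : (signlessLaplacian G).IsHermitian := by
  classical
  ext i j
  unfold signlessLaplacian
  simp only [Matrix.conjTranspose_apply, Matrix.add_apply, star_trivial,
    SimpleGraph.adjMatrix_apply, G.adj_comm i j]
  congr 1
  by_cases h : i = j
  · subst h; rfl
  · rw [Matrix.diagonal_apply_ne _ h, Matrix.diagonal_apply_ne _ (Ne.symm h)]

open Classical in
theorem qIndex_eq (G : SimpleGraph V) : qIndex G = sSup (spectrum ℝ (signlessLaplacian G)) := rfl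

open Classical in
theorem spec_finite (G : SimpleGraph V) : (spectrum ℝ (signlessLaplacian G)).Finite := by
  rw [(slq_herm G).spectrum_real_eq_range_eigenvalues]
  exact Set.finite_range _

open Classical in
theorem slq_psd (G : SimpleGraph V) :
    (qIndex G • (1 : Matrix V V ℝ) - signlessLaplacian G).PosSemidef := by
  rw [Matrix.posSemidef_iff_isHermitian_and_spectrum_nonneg]
  refine ⟨?_, ?_⟩
  · refine Matrix.IsHermitian.sub ?_ (slq_herm G)
    ext i j
    simp [Matrix.one_apply, eq_comm]
  · intro m hm
    have : m ∈ spectrum ℝ (algebraMap ℝ (Matrix V V ℝ) (qIndex G) - signlessLaplacian G) := by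
      rwa [Algebra.algebraMap_eq_smul_one]
    rw [← spectrum.singleton_sub_eq] at this
    obtain ⟨a, ha, b, hb, rfl⟩ := Set.mem_sub.1 this
    rw [Set.mem_singleton_iff] at ha
    subst ha
    have := le_csSup (spec_finite G).bddAbove hb
    rw [← qIndex_eq] at this
    simpa using this

theorem slq_rayleigh (G : SimpleGraph V) (x : V → ℝ) :
    x ⬝ᵥ (signlessLaplacian G *ᵥ x) ≤ qIndex G * (x ⬝ᵥ x) := by
  classical
  have := (slq_psd G).dotProduct_mulVec_nonneg x
  rw [Matrix.sub_mulVec, dotProduct_sub, Matrix.smul_mulVec, Matrix.one_mulVec,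
    dotProduct_smul] at this
  simp only [star_trivial, smul_eq_mul] at this
  linarith

theorem slq_rayleigh_eq (G : SimpleGraph V) (x : V → ℝ)
    (h : qIndex G * (x ⬝ᵥ x) ≤ x ⬝ᵥ (signlessLaplacian G *ᵥ x)) :
    signlessLaplacian G *ᵥ x = qIndex G • x := by
  classical
  have h2 := slq_rayleigh G x
  have := ((slq_psd G).dotProduct_mulVec_zero_iff x).1 (by
    rw [Matrix.sub_mulVec, dotProduct_sub, Matrix.smul_mulVec, Matrix.one_mulVec,
      dotProduct_smul]
    simp only [star_trivial, smul_eq_mul]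
    linarith)
  rw [Matrix.sub_mulVec, Matrix.smul_mulVec, Matrix.one_mulVec, sub_eq_zero] at this
  exact this.symm

theorem exists_perron [Nonempty V] (G : SimpleGraph V) :
    ∃ x : V → ℝ, x ≠ 0 ∧ (∀ i, 0 ≤ x i) ∧ signlessLaplacian G *ᵥ x = qIndex G • x := by
  classical
  have hne : (spectrum ℝ (signlessLaplacian G)).Nonempty := by
    rw [(slq_herm G).spectrum_real_eq_range_eigenvalues]
    exact Set.range_nonempty _
  have hmem : qIndex G ∈ spectrum ℝ (signlessLaplacian G) := by
    have := hne.csSup_mem (spec_finite G)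
    rwa [← qIndex_eq] at this
  rw [spectrum.mem_iff, Matrix.isUnit_iff_isUnit_det, isUnit_iff_ne_zero, not_not,
    ← Matrix.exists_mulVec_eq_zero_iff] at hmem
  obtain ⟨v, hv, hv2⟩ := hmem
  rw [Algebra.algebraMap_eq_smul_one, Matrix.sub_mulVec, Matrix.smul_mulVec, Matrix.one_mulVec,
    sub_eq_zero] at hv2
  refine ⟨fun i => |v i|, ?_, fun i => abs_nonneg _, ?_⟩
  · intro h
    apply hv
    ext i
    simpa using congrFun h i
  · apply slq_rayleigh_eq
    have e1 : (fun i => |v i|) ⬝ᵥ (fun i => |v i|) = v ⬝ᵥ v := by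
      simp [dotProduct]
    have e2 : v ⬝ᵥ (signlessLaplacian G *ᵥ v) = qIndex G * (v ⬝ᵥ v) := by
      rw [← hv2, dotProduct_smul, smul_eq_mul]
    rw [e1, ← e2]
    have a1 := slq_quad G v
    have a2 := slq_quad G (fun i => |v i|)
    have : ∑ i, ∑ j, (if G.Adj i j then (1:ℝ) else 0) * (v i + v j) ^ 2 ≤
        ∑ i, ∑ j, (if G.Adj i j then (1:ℝ) else 0) * (|v i| + |v j|) ^ 2 := by
      refine Finset.sum_le_sum fun i _ => Finset.sum_le_sum fun j _ => ?_
      refine mul_le_mul_of_nonneg_left ?_ (by split_ifs <;> norm_num)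
      rw [← sq_abs (v i + v j)]
      exact pow_le_pow_left₀ (abs_nonneg _) (abs_add_le _ _) 2
    linarith

/-- Core argument with abstract vertices. -/
theorem core (G F : SimpleGraph V) (N : ℕ) (hN : Fintype.card V = N) (hN10 : 10 ≤ N)
    (o a b c d k : V) (hoa : o ≠ a) (hob : o ≠ b) (hok : o ≠ k) (hab : a ≠ b)
    (hak : a ≠ k) (hbk : b ≠ k) (hco : c ≠ o) (hck : c ≠ k) (hca : c ≠ a) (hcb : c ≠ b)
    (hdo : d ≠ o) (hdk : d ≠ k) (hda : d ≠ a) (hdb : d ≠ b)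
    (h0 : ∀ u, G.Adj o u ↔ u = a ∨ u = b)
    (hk : ∀ u, G.Adj k u ↔ u ≠ o ∧ u ≠ k)
    (ha : ∀ u, G.Adj a u ↔ u = o ∨ u = c ∨ u = k ∨ u = b)
    (hb : ∀ u, G.Adj b u ↔ u = o ∨ u = a ∨ u = k ∨ u = d)
    (hF : ∀ u v, F.Adj u v ↔ (G.Adj u v ∧ ¬ ((u = a ∧ v = b) ∨ (u = b ∧ v = a))) ∨
      (u = o ∧ v = k) ∨ (u = k ∧ v = o)) :
    qIndex G < qIndex F := by
  classical
  have : Nonempty V := ⟨o⟩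
  have hNR : (10:ℝ) ≤ N := by exact_mod_cast hN10
  have fk : Finset.univ.filter (fun j => G.Adj k j) = (Finset.univ.erase o).erase k := by
    ext u; simp [hk, and_comm]
  have cardk : (((Finset.univ.filter (fun j => G.Adj k j)).card : ℕ) : ℝ) = N - 2 := by
    rw [fk, Finset.card_erase_of_mem (by simp [hok.symm]), Finset.card_erase_of_mem (by simp),
      Finset.card_univ, hN, show N - 1 - 1 = N - 2 by omega, Nat.cast_sub (by omega)]
    norm_num
  -- lower bound on the Q-index
  have hq : (N:ℝ) - 1 ≤ qIndex G := by
    set y : V → ℝ := fun u => if u = k then (N:ℝ) - 2 else if u = o then 0 else 1 with hy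
    have yk : y k = N - 2 := by simp [hy]
    have yo : y o = 0 := by simp [hy, hok]
    have y1 : ∀ u, u ≠ o → u ≠ k → y u = 1 := by intro u h1 h2; simp [hy, h1, h2]
    have y0 : ∀ u, 0 ≤ y u := by
      intro u
      simp only [hy]
      split_ifs <;> linarith
    have hr := slq_rayleigh G y
    have hpos : 0 < y ⬝ᵥ y := by
      have : y k * y k ≤ y ⬝ᵥ y :=
        Finset.single_le_sum (f := fun i => y i * y i) (fun i _ => mul_self_nonneg _)
          (Finset.mem_univ k)
      rw [yk] at this
      nlinarith
    have hlow : ((N:ℝ) - 1) * (y ⬝ᵥ y) ≤ y ⬝ᵥ (signlessLaplacian G *ᵥ y) := by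
      simp only [dotProduct, Finset.mul_sum]
      refine Finset.sum_le_sum fun i _ => ?_
      suffices h : i = o ∨ ((N:ℝ) - 1) * y i ≤ (signlessLaplacian G *ᵥ y) i by
        rcases h with rfl | h
        · rw [yo]; simp
        · have := mul_le_mul_of_nonneg_left h (y0 i)
          linarith
      by_cases hio : i = o
      · exact Or.inl hio
      right
      rw [slq_mulVec]
      by_cases hik : i = k
      · subst hik
        rw [Finset.sum_congr rfl (g := fun _ => (N:ℝ) - 1), Finset.sum_const, nsmul_eq_mul, cardk,
          yk]
        · linarith
        · intro u hu
          rw [Finset.mem_filter, hk] at hu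
          rw [yk, y1 u hu.2.1 hu.2.2]; ring
      · have : y i + y k ≤ ∑ j ∈ Finset.univ.filter (fun j => G.Adj i j), (y i + y j) :=
          Finset.single_le_sum (f := fun j => y i + y j) (fun j _ => add_nonneg (y0 _) (y0 _))
            (by simp only [Finset.mem_filter, Finset.mem_univ, true_and]
                exact ((hk i).2 ⟨hio, hik⟩).symm)
        rw [yk, y1 i hio hik] at this
        rw [y1 i hio hik]; linarith
    exact le_of_mul_le_mul_right (hlow.trans hr) hpos
  obtain ⟨x, hx0, hxn, hx⟩ := exists_perron G
  set q := qIndex G with hqdef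
  have row : ∀ i, ∑ j ∈ Finset.univ.filter (fun j => G.Adj i j), (x i + x j) = q * x i := by
    intro i
    rw [← slq_mulVec, hx]; rfl
  have ro : (x o + x a) + (x o + x b) = q * x o := by
    rw [← row o, show Finset.univ.filter (fun j => G.Adj o j) = {a, b} by ext u; simp [h0],
      Finset.sum_pair hab]
  have ra : (x a + x o) + ((x a + x c) + ((x a + x k) + (x a + x b))) = q * x a := by
    rw [← row a, show Finset.univ.filter (fun j => G.Adj a j) = {o, c, k, b} by ext u; simp [ha],
      Finset.sum_insert (by simp [hco.symm, hok, hob]), Finset.sum_insert (by simp [hck, hcb]),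
      Finset.sum_pair hbk.symm]
  have rb : (x b + x o) + ((x b + x a) + ((x b + x k) + (x b + x d))) = q * x b := by
    rw [← row b, show Finset.univ.filter (fun j => G.Adj b j) = {o, a, k, d} by ext u; simp [hb],
      Finset.sum_insert (by simp [hoa, hok, hdo.symm]), Finset.sum_insert (by simp [hak, hda.symm]),
      Finset.sum_pair hdk.symm]
  have dom : ∀ u, u ≠ o → u ≠ k → u ≠ a → u ≠ b → x u ≤ x k := by
    intro u huo huk hua hub
    by_contra! hlt
    have adj : G.Adj k u := (hk u).2 ⟨huo, huk⟩
    have e1 := Finset.add_sum_erase (Finset.univ.filter (fun j => G.Adj u j))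
      (fun j => x u + x j) (a := k) (by simpa using adj.symm)
    have e2 := Finset.add_sum_erase (Finset.univ.filter (fun j => G.Adj k j))
      (fun j => x u + x j) (a := u) (by simpa using adj)
    have e3 : ∑ j ∈ (Finset.univ.filter (fun j => G.Adj u j)).erase k, (x u + x j) ≤
        ∑ j ∈ (Finset.univ.filter (fun j => G.Adj k j)).erase u, (x u + x j) := by
      refine Finset.sum_le_sum_of_subset_of_nonneg ?_ fun j _ _ => add_nonneg (hxn _) (hxn _)
      intro w hw
      simp only [Finset.mem_erase, Finset.mem_filter, Finset.mem_univ, true_and] at hw ⊢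
      refine ⟨hw.2.ne', (hk w).2 ⟨?_, hw.1⟩⟩
      rintro rfl
      rcases (h0 u).1 hw.2.symm with h | h
      · exact hua h
      · exact hub h
    have e4 : ∑ j ∈ Finset.univ.filter (fun j => G.Adj k j), (x u + x j) =
        q * x k + ((N:ℝ) - 2) * (x u - x k) := by
      rw [← row k, ← cardk, ← nsmul_eq_mul, ← Finset.sum_const, ← Finset.sum_add_distrib]
      refine Finset.sum_congr rfl fun j _ => by ring
    rw [row u] at e1
    rw [e4] at e2
    nlinarith
  have hc := dom c hco hck hca hcb
  have hd := dom d hdo hdk hda hdb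
  have q9 : 9 ≤ q := by linarith
  -- (q - 2) x₀ = s and (q - 5) s = 2 x₀ + 2 x_k + x_c + x_d
  have s1 : (q - 2) * x o = x a + x b := by linarith
  have s2 : (q - 5) * (x a + x b) ≤ 2 * x o + 4 * x k := by linarith
  have s3 : ((q - 5) * (q - 2) - 2) * x o ≤ 4 * x k := by
    rw [← s1] at s2; linarith
  have xk : 0 < x k := by
    by_contra! hle
    have hk0 : x k = 0 := le_antisymm hle (hxn k)
    have ho0 : x o = 0 := by
      have h9 : 26 ≤ (q - 5) * (q - 2) - 2 := by nlinarith
      have := mul_le_mul_of_nonneg_right h9 (hxn o)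
      have := hxn o
      linarith
    have ha0 : x a = 0 := by
      have := hxn a; have := hxn b
      rw [ho0] at s1; linarith
    have hb0 : x b = 0 := by
      have := hxn a; have := hxn b
      rw [ho0] at s1; linarith
    apply hx0
    ext u
    simp only [Pi.zero_apply]
    by_cases h1 : u = o
    · rw [h1, ho0]
    by_cases h2 : u = k
    · rw [h2, hk0]
    by_cases h3 : u = a
    · rw [h3, ha0]
    by_cases h4 : u = b
    · rw [h4, hb0]
    exact le_antisymm ((dom u h1 h2 h3 h4).trans hle) (hxn u)
  have key : x a + x b < x o + x k := by
    rw [← s1]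
    have : 4 * (q - 3) * x o < 4 * x k := by
      rcases (hxn o).eq_or_lt with h | h
      · rw [← h]; linarith
      · have : 4 * (q - 3) < (q - 5) * (q - 2) - 2 := by nlinarith
        nlinarith
    linarith
  have quad : 2 * (x ⬝ᵥ (signlessLaplacian F *ᵥ x)) = 2 * (x ⬝ᵥ (signlessLaplacian G *ᵥ x)) +
      2 * ((x o + x k) ^ 2 - (x a + x b) ^ 2) := by
    rw [slq_quad, slq_quad]
    have e : ∀ i j, (if F.Adj i j then (1:ℝ) else 0) = (if G.Adj i j then (1:ℝ) else 0)
        + ((if i = o then (if j = k then (1:ℝ) else 0) else 0)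
        + (if i = k then (if j = o then (1:ℝ) else 0) else 0)
        - (if i = a then (if j = b then (1:ℝ) else 0) else 0)
        - (if i = b then (if j = a then (1:ℝ) else 0) else 0)) := by
      intro i j
      have gab : G.Adj a b := (ha b).2 (by simp)
      have gok : ¬ G.Adj o k := by rw [h0]; simp [hak.symm, hbk.symm]
      have gba := gab.symm
      have gko : ¬ G.Adj k o := fun h => gok h.symm
      by_cases c1 : i = o ∧ j = k
      · obtain ⟨rfl, rfl⟩ := c1
        simp [hF, gok, hok, hoa, hob]
      by_cases c2 : i = k ∧ j = o
      · obtain ⟨rfl, rfl⟩ := c2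
        simp [hF, gko, hok.symm, hak.symm, hbk.symm]
      by_cases c3 : i = a ∧ j = b
      · obtain ⟨rfl, rfl⟩ := c3
        simp [hF, gab, hoa.symm, hak, hab]
      by_cases c4 : i = b ∧ j = a
      · obtain ⟨rfl, rfl⟩ := c4
        simp [hF, gba, hob.symm, hbk, hab.symm]
      simp only [← ite_and, c1, c2, c3, c4, hF]
      simp
    simp only [e, add_mul, sub_mul, Finset.sum_add_distrib, Finset.sum_sub_distrib, ite_mul,
      zero_mul, one_mul]
    simp
    ring
  have hFr := slq_rayleigh F x
  have hG : x ⬝ᵥ (signlessLaplacian G *ᵥ x) = q * (x ⬝ᵥ x) := by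
    rw [hx, dotProduct_smul, smul_eq_mul]
  have hpos : 0 < x ⬝ᵥ x := by
    have : x k * x k ≤ x ⬝ᵥ x :=
      Finset.single_le_sum (f := fun i => x i * x i) (fun i _ => mul_self_nonneg _)
        (Finset.mem_univ k)
    nlinarith
  have hs : 0 ≤ x a + x b := add_nonneg (hxn _) (hxn _)
  have hsq : (x a + x b) ^ 2 < (x o + x k) ^ 2 := by nlinarith
  have : q * (x ⬝ᵥ x) < qIndex F * (x ⬝ᵥ x) := by linarith
  exact lt_of_mul_lt_mul_right this hpos.le

end helpers

/-- for the maximal outer-planar graph with `Δ = n - 2`, if `n ≥ 10` then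
deleting the edge `v_1 v_{n-1}` and adding the edge `v_0 v_k` increases the `Q`-index. -/
theorem stmt_4 (n k : ℕ) (hn : 6 ≤ n) (hk1 : 3 ≤ k) (hk2 : k ≤ n - 3)
    (G : SimpleGraph (Fin n))
    (h0 : G.neighborSet ⟨0, by omega⟩ = {⟨1, by omega⟩, ⟨n - 1, by omega⟩})
    (hk' : G.neighborSet ⟨k, by omega⟩ =
      {u : Fin n | u ≠ ⟨0, by omega⟩ ∧ u ≠ ⟨k, by omega⟩})
    (h1 : G.neighborSet ⟨1, by omega⟩ =
      {⟨0, by omega⟩, ⟨2, by omega⟩, ⟨k, by omega⟩, ⟨n - 1, by omega⟩})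
    (hlast : G.neighborSet ⟨n - 1, by omega⟩ =
      {⟨0, by omega⟩, ⟨1, by omega⟩, ⟨k, by omega⟩, ⟨n - 2, by omega⟩})
    (hn10 : 10 ≤ n) :
    qIndex G <
      qIndex (SimpleGraph.fromEdgeSet
        ((G.edgeSet \ {s((⟨1, by omega⟩ : Fin n), (⟨n - 1, by omega⟩ : Fin n))}) ∪
          {s((⟨0, by omega⟩ : Fin n), (⟨k, by omega⟩ : Fin n))})) := by
  have key : ∀ {S : Set (Fin n)} {v : Fin n}, G.neighborSet v = S → ∀ u, G.Adj v u ↔ u ∈ S := by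
    intro S v h u
    rw [← h, SimpleGraph.mem_neighborSet]
  refine core G _ n (by simp) hn10 ⟨0, by omega⟩ ⟨1, by omega⟩ ⟨n - 1, by omega⟩ ⟨2, by omega⟩
    ⟨n - 2, by omega⟩ ⟨k, by omega⟩ ?_ ?_ ?_ ?_ ?_ ?_ ?_ ?_ ?_ ?_ ?_ ?_ ?_ ?_ ?_ ?_ ?_ ?_ ?_
  iterate 14 (rw [Ne, Fin.mk.injEq]; omega)
  · intro u; rw [key h0]; simp
  · intro u; rw [key hk']; simp
  · intro u; rw [key h1]; simp
  · intro u; rw [key hlast]; simp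
  · intro u v
    have hne : (⟨0, by omega⟩ : Fin n) ≠ ⟨k, by omega⟩ := by
      rw [Ne, Fin.mk.injEq]; omega
    rw [SimpleGraph.fromEdgeSet_adj]
    simp only [Set.mem_union, Set.mem_sdiff, Set.mem_singleton_iff, SimpleGraph.mem_edgeSet,
      Sym2.eq_iff]
    constructor
    · exact fun h => h.1
    · intro h
      refine ⟨h, ?_⟩
      rcases h with h | ⟨rfl, rfl⟩ | ⟨rfl, rfl⟩
      · exact h.1.ne
      · exact hne
      · exact hne.symm
end

section
/- Under the stated hypotheses on G, the eigenvector x satisfies x_2 + x_0 > x_1. -/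
open Matrix

/-- The eigenvalue equation at a vertex, in terms of an explicit neighbourhood finset. -/
lemma signlessLaplacian_row {V : Type*} [Fintype V] (G : SimpleGraph V) (x : V → ℝ) (q : ℝ)
    (heig : (signlessLaplacian G).mulVec x = q • x) (v : V) (S : Finset V)
    (hS : G.neighborSet v = (S : Set V)) :
    (S.card : ℝ) * x v + ∑ u ∈ S, x u = q * x v := by
  classical
  have h := congrFun heig v
  have hf : ∀ inst : Fintype (G.neighborSet v), @SimpleGraph.neighborFinset V G v inst = S := by
    intro inst
    ext u
    rw [SimpleGraph.mem_neighborFinset, ← SimpleGraph.mem_neighborSet, hS, Finset.mem_coe]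
  simp only [signlessLaplacian, Matrix.add_mulVec, Pi.add_apply, Matrix.mulVec_diagonal,
    SimpleGraph.adjMatrix_mulVec_apply, Pi.smul_apply, smul_eq_mul,
    ← SimpleGraph.card_neighborFinset_eq_degree, hf] at h
  exact h

/-- for the maximal outer-planar graph of type `D_1` with `Δ = n - 3`,
the Perron eigenvector satisfies `x_2 + x_0 > x_1`. -/
theorem stmt_6 (n k : ℕ) (hn : 7 ≤ n) (hk1 : 4 ≤ k) (hk2 : k ≤ n - 3)
    (G : SimpleGraph (Fin n))
    (h0 : G.neighborSet ⟨0, by omega⟩ = {⟨1, by omega⟩, ⟨n - 1, by omega⟩})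
    (h1 : G.neighborSet ⟨1, by omega⟩ =
      {⟨0, by omega⟩, ⟨2, by omega⟩, ⟨n - 1, by omega⟩})
    (h2 : G.neighborSet ⟨2, by omega⟩ =
      {⟨1, by omega⟩, ⟨3, by omega⟩, ⟨k, by omega⟩, ⟨n - 1, by omega⟩})
    (hlast : G.neighborSet ⟨n - 1, by omega⟩ =
      {⟨0, by omega⟩, ⟨1, by omega⟩, ⟨2, by omega⟩, ⟨k, by omega⟩, ⟨n - 2, by omega⟩})
    (hk' : G.neighborSet ⟨k, by omega⟩ =
      {u : Fin n | 2 ≤ u.val ∧ u ≠ ⟨k, by omega⟩})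
    (x : Fin n → ℝ) (hpos : ∀ i, 0 < x i)
    (heig : (signlessLaplacian G).mulVec x = qIndex G • x) :
    x ⟨1, by omega⟩ < x ⟨2, by omega⟩ + x ⟨0, by omega⟩ := by
  have r0 := signlessLaplacian_row G x _ heig ⟨0, by omega⟩
    {⟨1, by omega⟩, ⟨n - 1, by omega⟩} (by rw [h0]; simp)
  have r1 := signlessLaplacian_row G x _ heig ⟨1, by omega⟩
    {⟨0, by omega⟩, ⟨2, by omega⟩, ⟨n - 1, by omega⟩} (by rw [h1]; simp)
  have r2 := signlessLaplacian_row G x _ heig ⟨2, by omega⟩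
    {⟨1, by omega⟩, ⟨3, by omega⟩, ⟨k, by omega⟩, ⟨n - 1, by omega⟩} (by rw [h2]; simp)
  have e1 : 1 ≠ n - 1 := by omega
  have e2 : 2 ≠ n - 1 := by omega
  have e3 : 3 ≠ n - 1 := by omega
  have e0 : 0 ≠ n - 1 := by omega
  have e4 : k ≠ n - 1 := by omega
  have e5 : 3 ≠ k := by omega
  have e6 : 1 ≠ k := by omega
  rw [Finset.sum_insert (by simp [e1]), Finset.sum_singleton,
    Finset.card_insert_of_notMem (by simp [e1]), Finset.card_singleton] at r0
  rw [Finset.sum_insert (by simp [e0]), Finset.sum_insert (by simp [e2]), Finset.sum_singleton,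
    Finset.card_insert_of_notMem (by simp [e0]), Finset.card_insert_of_notMem (by simp [e2]),
    Finset.card_singleton] at r1
  rw [Finset.sum_insert (by simp [e1, e6]), Finset.sum_insert (by simp [e3, e5]),
    Finset.sum_insert (by simp [e4]), Finset.sum_singleton,
    Finset.card_insert_of_notMem (by simp [e1, e6]),
    Finset.card_insert_of_notMem (by simp [e3, e5]),
    Finset.card_insert_of_notMem (by simp [e4]), Finset.card_singleton] at r2
  push_cast at r0 r1 r2
  have p0 := hpos ⟨0, by omega⟩
  have p1 := hpos ⟨1, by omega⟩
  have p2 := hpos ⟨2, by omega⟩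
  have p3 := hpos ⟨3, by omega⟩
  have pk := hpos ⟨k, by omega⟩
  have pl := hpos ⟨n - 1, by omega⟩
  generalize qIndex G = q at *
  generalize x ⟨0, _⟩ = a at *
  generalize x ⟨1, _⟩ = b at *
  generalize x ⟨2, _⟩ = c at *
  generalize x ⟨3, _⟩ = f at *
  generalize x ⟨k, _⟩ = m at *
  generalize x ⟨n - 1, _⟩ = e at *
  have hq : 4 < q := by
    by_contra hcon
    have := mul_le_mul_of_nonneg_right (not_lt.mp hcon) p2.le
    linarith
  have ha : 4 * a < q * a := mul_lt_mul_of_pos_right hq p0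
  have key : (q - 3) * (c + a - b) = 2 * b - 2 * a + e + f + m := by linarith
  have hpos' : 0 < (q - 3) * (c + a - b) := by rw [key]; linarith
  have := (mul_pos_iff_of_pos_left (by linarith : (0 : ℝ) < q - 3)).mp hpos'
  linarith
end

section
/- Under the stated hypotheses on G, the eigenvector x satisfies x_k > x_0 and x_k > x_1. -/
open Matrix

/-- Row of the eigenvector equation, with the neighbourhood given as a finset. -/
theorem row_eq {V : Type*} [Fintype V] (G : SimpleGraph V) (x : V → ℝ) (q : ℝ)
    (heig : (signlessLaplacian G).mulVec x = q • x) (v : V) (s : Finset V)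
    (hs : G.neighborSet v = (s : Set V)) :
    (s.card : ℝ) * x v + ∑ u ∈ s, x u = q * x v := by
  classical
  have h := congrFun heig v
  have e : G.neighborFinset v = s := by
    ext u
    have := Set.ext_iff.1 hs u
    simpa using this
  rw [← e, G.card_neighborFinset_eq_degree]
  simp only [signlessLaplacian, Matrix.add_mulVec, Pi.add_apply, Pi.smul_apply, smul_eq_mul,
    Matrix.mulVec_diagonal, SimpleGraph.adjMatrix_mulVec_apply] at h
  convert h using 3

/-- for the maximal outer-planar graph of type `D_1` with `Δ = n - 3`,
the Perron eigenvector satisfies `x_k > x_0` and `x_k > x_1`. -/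
theorem stmt_7 (n k : ℕ) (hn : 7 ≤ n) (hk1 : 4 ≤ k) (hk2 : k ≤ n - 3)
    (G : SimpleGraph (Fin n))
    (h0 : G.neighborSet ⟨0, by omega⟩ = {⟨1, by omega⟩, ⟨n - 1, by omega⟩})
    (h1 : G.neighborSet ⟨1, by omega⟩ =
      {⟨0, by omega⟩, ⟨2, by omega⟩, ⟨n - 1, by omega⟩})
    (h2 : G.neighborSet ⟨2, by omega⟩ =
      {⟨1, by omega⟩, ⟨3, by omega⟩, ⟨k, by omega⟩, ⟨n - 1, by omega⟩})
    (hlast : G.neighborSet ⟨n - 1, by omega⟩ =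
      {⟨0, by omega⟩, ⟨1, by omega⟩, ⟨2, by omega⟩, ⟨k, by omega⟩, ⟨n - 2, by omega⟩})
    (hk' : G.neighborSet ⟨k, by omega⟩ =
      {u : Fin n | 2 ≤ u.val ∧ u ≠ ⟨k, by omega⟩})
    (x : Fin n → ℝ) (hpos : ∀ i, 0 < x i)
    (heig : (signlessLaplacian G).mulVec x = qIndex G • x) :
    x ⟨0, by omega⟩ < x ⟨k, by omega⟩ ∧ x ⟨1, by omega⟩ < x ⟨k, by omega⟩ := by
  classical
  generalize qIndex G = q at heig
  have r0 := row_eq G x q heig ⟨0, by omega⟩ {⟨1, by omega⟩, ⟨n - 1, by omega⟩} (by simp [h0])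
  have r1 := row_eq G x q heig ⟨1, by omega⟩ {⟨0, by omega⟩, ⟨2, by omega⟩, ⟨n - 1, by omega⟩}
    (by simp [h1])
  have rk := row_eq G x q heig ⟨k, by omega⟩
    (Finset.univ.filter (fun u : Fin n => 2 ≤ u.val ∧ u ≠ ⟨k, by omega⟩)) (by simp [hk'])
  set s := Finset.univ.filter (fun u : Fin n => 2 ≤ u.val ∧ u ≠ ⟨k, by omega⟩) with hs
  have hsub : ({⟨2, by omega⟩, ⟨3, by omega⟩, ⟨n - 2, by omega⟩, ⟨n - 1, by omega⟩} :
      Finset (Fin n)) ⊆ s := by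
    intro u hu
    simp only [Finset.mem_insert, Finset.mem_singleton] at hu
    simp only [hs, Finset.mem_filter, Finset.mem_univ, true_and, ne_eq]
    rcases hu with rfl | rfl | rfl | rfl <;> simp only [Fin.mk.injEq] <;> omega
  have n1 : ¬ (1 = n - 1) := by omega
  have n2 : ¬ (2 = n - 1) := by omega
  have n3 : ¬ (0 = n - 1) := by omega
  have n4 : ¬ (2 = n - 2) := by omega
  have n5 : ¬ (3 = n - 2) := by omega
  have n6 : ¬ (3 = n - 1) := by omega
  have n7 : ¬ (n - 2 = n - 1) := by omega
  have hcard : 4 ≤ s.card := by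
    refine le_trans ?_ (Finset.card_le_card hsub)
    simp [Finset.card_insert_of_notMem, n1, n2, n3, n4, n5, n6, n7]
  have hsum := Finset.sum_le_sum_of_subset_of_nonneg hsub (f := x) (fun i _ _ => (hpos i).le)
  rw [Finset.sum_insert (by simp [n2, n4]), Finset.sum_insert (by simp [n5, n6]),
    Finset.sum_insert (by simp [n7]), Finset.sum_singleton] at hsum
  rw [Finset.card_pair (by simp [n1]), Finset.sum_pair (by simp [n1])] at r0
  rw [Finset.card_insert_of_notMem (by simp [n3]), Finset.card_pair (by simp [n2]),
    Finset.sum_insert (by simp [n3]), Finset.sum_pair (by simp [n2])] at r1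
  have hcard' : (4 : ℝ) ≤ (s.card : ℝ) := by exact_mod_cast hcard
  generalize (s.card : ℝ) = t at rk hcard'
  generalize ∑ u ∈ s, x u = S at rk hsum
  have p0 := hpos ⟨0, by omega⟩
  have p1 := hpos ⟨1, by omega⟩
  have p2 := hpos ⟨2, by omega⟩
  have p3 := hpos ⟨3, by omega⟩
  have p4 := hpos ⟨n - 2, by omega⟩
  have p5 := hpos ⟨n - 1, by omega⟩
  have pk := hpos ⟨k, by omega⟩
  generalize x ⟨0, _⟩ = a at *
  generalize x ⟨1, _⟩ = b at *
  generalize x ⟨2, _⟩ = c at *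
  generalize x ⟨3, _⟩ = e at *
  generalize x ⟨n - 2, _⟩ = f at *
  generalize x ⟨n - 1, _⟩ = d at *
  generalize x ⟨k, _⟩ = m at *
  push_cast at r0 r1
  have hq : t < q := by
    by_contra hc
    have := mul_le_mul_of_nonneg_right (not_lt.1 hc) pk.le
    linarith
  have hab : a < b := by
    by_contra hc
    have := mul_le_mul_of_nonneg_left (not_lt.1 hc) (by linarith : 0 ≤ q - 2)
    linarith
  have hbm : b < m := by
    by_contra hc
    have h3 := mul_le_mul_of_nonneg_left (not_lt.1 hc) (by linarith : 0 ≤ q - t)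
    have h4 := mul_le_mul_of_nonneg_right hcard' p1.le
    linarith
  exact ⟨hab.trans hbm, hbm⟩
end

section
/- Under the stated hypotheses on G, if n ≥ 10 then the eigenvector x satisfies x_k > x_{n−1}. -/
open Matrix

theorem eig_eq {n : ℕ} (G : SimpleGraph (Fin n)) (x : Fin n → ℝ) (q : ℝ)
    (heig : (signlessLaplacian G).mulVec x = q • x) (v : Fin n) (s : Finset (Fin n))
    (hs : G.neighborSet v = ↑s) : q * x v = s.card * x v + ∑ u ∈ s, x u := by
  classical
  have h := congrFun heig v
  have hs' : G.neighborFinset v = s := by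
    ext u
    have : u ∈ G.neighborSet v ↔ u ∈ (s : Set (Fin n)) := by rw [hs]
    simpa using this
  have hQ : signlessLaplacian G
      = Matrix.diagonal (fun v => (G.degree v : ℝ)) + G.adjMatrix ℝ := by
    unfold signlessLaplacian
    congr!
  rw [hQ, Matrix.add_mulVec, Pi.add_apply, Matrix.mulVec_diagonal,
    SimpleGraph.adjMatrix_mulVec_apply, hs', ← SimpleGraph.card_neighborFinset_eq_degree, hs'] at h
  simpa using h.symm

/-- for the maximal outer-planar graph of type `D_1` with `Δ = n - 3`,
if `n ≥ 10` then the Perron eigenvector satisfies `x_k > x_{n-1}`. -/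
theorem stmt_9 (n k : ℕ) (hn : 7 ≤ n) (hk1 : 4 ≤ k) (hk2 : k ≤ n - 3)
    (G : SimpleGraph (Fin n))
    (h0 : G.neighborSet ⟨0, by omega⟩ = {⟨1, by omega⟩, ⟨n - 1, by omega⟩})
    (h1 : G.neighborSet ⟨1, by omega⟩ =
      {⟨0, by omega⟩, ⟨2, by omega⟩, ⟨n - 1, by omega⟩})
    (h2 : G.neighborSet ⟨2, by omega⟩ =
      {⟨1, by omega⟩, ⟨3, by omega⟩, ⟨k, by omega⟩, ⟨n - 1, by omega⟩})
    (hlast : G.neighborSet ⟨n - 1, by omega⟩ =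
      {⟨0, by omega⟩, ⟨1, by omega⟩, ⟨2, by omega⟩, ⟨k, by omega⟩, ⟨n - 2, by omega⟩})
    (hk' : G.neighborSet ⟨k, by omega⟩ =
      {u : Fin n | 2 ≤ u.val ∧ u ≠ ⟨k, by omega⟩})
    (x : Fin n → ℝ) (hpos : ∀ i, 0 < x i)
    (heig : (signlessLaplacian G).mulVec x = qIndex G • x)
    (hn10 : 10 ≤ n) :
    x ⟨n - 1, by omega⟩ < x ⟨k, by omega⟩ := by
  have b0 : 0 < n := by omega
  have b1 : 1 < n := by omega
  have b2 : 2 < n := by omega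
  have b3 : 3 < n := by omega
  have bk : k < n := by omega
  have bm : n - 2 < n := by omega
  have bl : n - 1 < n := by omega
  have e0 := eig_eq G x _ heig ⟨0, b0⟩ ({⟨1, b1⟩, ⟨n - 1, bl⟩} : Finset (Fin n)) (by simpa using h0)
  have e1 := eig_eq G x _ heig ⟨1, b1⟩
    ({⟨0, b0⟩, ⟨2, b2⟩, ⟨n - 1, bl⟩} : Finset (Fin n)) (by simpa using h1)
  have e2 := eig_eq G x _ heig ⟨2, b2⟩
    ({⟨1, b1⟩, ⟨3, b3⟩, ⟨k, bk⟩, ⟨n - 1, bl⟩} : Finset (Fin n)) (by simpa using h2)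
  have el := eig_eq G x _ heig ⟨n - 1, bl⟩
    ({⟨0, b0⟩, ⟨1, b1⟩, ⟨2, b2⟩, ⟨k, bk⟩, ⟨n - 2, bm⟩} : Finset (Fin n))
    (by simpa using hlast)
  have ek := eig_eq G x _ heig ⟨k, by omega⟩
    ({⟨0, by omega⟩, ⟨1, by omega⟩, ⟨k, by omega⟩} : Finset (Fin n))ᶜ (by
      rw [hk']
      ext u
      simp [Fin.ext_iff]
      omega)
  have hsub : ({⟨2, by omega⟩, ⟨3, by omega⟩, ⟨n - 2, by omega⟩, ⟨n - 1, by omega⟩} :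
      Finset (Fin n)) ⊆ ({⟨0, by omega⟩, ⟨1, by omega⟩, ⟨k, by omega⟩} : Finset (Fin n))ᶜ := by
    intro u
    simp [Fin.ext_iff]
    omega
  have hsum := Finset.sum_le_sum_of_subset_of_nonneg (f := x) hsub
    (fun i _ _ => (hpos i).le)
  have hcard : (7 : ℝ) ≤
      (({⟨0, by omega⟩, ⟨1, by omega⟩, ⟨k, by omega⟩} : Finset (Fin n))ᶜ.card : ℝ) := by
    have := Finset.card_le_three (a := (⟨0, by omega⟩ : Fin n)) (b := ⟨1, by omega⟩)
      (c := ⟨k, by omega⟩)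
    rw [Finset.card_compl, Fintype.card_fin]
    exact_mod_cast (by omega : 7 ≤ n - _)
  generalize (({⟨0, by omega⟩, ⟨1, by omega⟩, ⟨k, by omega⟩} : Finset (Fin n))ᶜ.card : ℝ) = c
    at ek hcard
  have a1 : 0 ≠ n - 1 := by omega
  have a2 : 1 ≠ n - 1 := by omega
  have a3 : 2 ≠ n - 1 := by omega
  have a4 : 3 ≠ n - 1 := by omega
  have a5 : k ≠ n - 1 := by omega
  have a6 : 0 ≠ n - 2 := by omega
  have a7 : 1 ≠ n - 2 := by omega
  have a8 : 2 ≠ n - 2 := by omega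
  have a9 : 3 ≠ n - 2 := by omega
  have a10 : k ≠ n - 2 := by omega
  have a11 : n - 2 ≠ n - 1 := by omega
  have a12 : 0 ≠ k := by omega
  have a13 : 1 ≠ k := by omega
  have a14 : 2 ≠ k := by omega
  have a15 : 3 ≠ k := by omega
  rw [Finset.sum_insert (by simp [Fin.ext_iff, *]), Finset.sum_singleton,
    Finset.card_insert_of_notMem (by simp [Fin.ext_iff, *]), Finset.card_singleton] at e0
  rw [Finset.sum_insert (by simp [Fin.ext_iff, *]), Finset.sum_insert (by simp [Fin.ext_iff, *]),
    Finset.sum_singleton,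
    Finset.card_insert_of_notMem (by simp [Fin.ext_iff, *]),
    Finset.card_insert_of_notMem (by simp [Fin.ext_iff, *]), Finset.card_singleton] at e1
  rw [Finset.sum_insert (by simp [Fin.ext_iff, *]), Finset.sum_insert (by simp [Fin.ext_iff, *]),
    Finset.sum_insert (by simp [Fin.ext_iff, *]), Finset.sum_singleton,
    Finset.card_insert_of_notMem (by simp [Fin.ext_iff, *]),
    Finset.card_insert_of_notMem (by simp [Fin.ext_iff, *]),
    Finset.card_insert_of_notMem (by simp [Fin.ext_iff, *]), Finset.card_singleton] at e2
  rw [Finset.sum_insert (by simp [Fin.ext_iff, *]), Finset.sum_insert (by simp [Fin.ext_iff, *]),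
    Finset.sum_insert (by simp [Fin.ext_iff, *]), Finset.sum_insert (by simp [Fin.ext_iff, *]),
    Finset.sum_singleton,
    Finset.card_insert_of_notMem (by simp [Fin.ext_iff, *]),
    Finset.card_insert_of_notMem (by simp [Fin.ext_iff, *]),
    Finset.card_insert_of_notMem (by simp [Fin.ext_iff, *]),
    Finset.card_insert_of_notMem (by simp [Fin.ext_iff, *]), Finset.card_singleton] at el
  rw [Finset.sum_insert (by simp [Fin.ext_iff, *]), Finset.sum_insert (by simp [Fin.ext_iff, *]),
    Finset.sum_insert (by simp [Fin.ext_iff, *]), Finset.sum_singleton] at hsum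
  have p0 := hpos ⟨0, by omega⟩
  have p1 := hpos ⟨1, by omega⟩
  have p2 := hpos ⟨2, by omega⟩
  have p3 := hpos ⟨3, by omega⟩
  have pk := hpos ⟨k, by omega⟩
  have pm := hpos ⟨n - 2, by omega⟩
  have pl := hpos ⟨n - 1, by omega⟩
  generalize qIndex G = q at *
  generalize x ⟨0, _⟩ = x0 at *
  generalize x ⟨1, _⟩ = x1 at *
  generalize x ⟨2, _⟩ = x2 at *
  generalize x ⟨3, _⟩ = x3 at *
  generalize x ⟨k, _⟩ = b at *
  generalize x ⟨n - 2, _⟩ = m at *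
  generalize x ⟨n - 1, _⟩ = a at *
  push_cast at e0 e1 e2 el
  by_contra hab
  push Not at hab
  have hqc : c < q := by
    by_contra h
    push Not at h
    have := mul_le_mul_of_nonneg_right h pk.le
    linarith
  have f0 : 0 ≤ (q - 7) * x0 := mul_nonneg (by linarith) p0.le
  have f1 : 0 ≤ (q - 7) * x1 := mul_nonneg (by linarith) p1.le
  have f2 : 0 ≤ (q - 7) * x2 := mul_nonneg (by linarith) p2.le
  have f3 : 0 ≤ (q - c + 1) * (a - b) := mul_nonneg (by linarith) (by linarith)
  have f4 : 0 ≤ (c - 7) * a := mul_nonneg (by linarith) pl.le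
  linarith
end

section
/- Under the stated hypotheses on G, if n ≥ 12 then the eigenvector x satisfies x_k + x_1 > x_2 + x_{n−1}. -/
open Matrix

/-- The eigenvalue equation at a vertex, with the neighbourhood given as a finset. -/
theorem eig_eq_aux {V : Type*} [Fintype V] (G : SimpleGraph V) (x : V → ℝ) (q : ℝ)
    (heig : (signlessLaplacian G).mulVec x = q • x) (v : V) (s : Finset V)
    (hs : G.neighborSet v = ↑s) :
    q * x v = s.card * x v + ∑ w ∈ s, x w := by
  classical
  have h := congrFun heig v
  have hN : G.neighborFinset v = s := by
    ext w
    have : w ∈ G.neighborSet v ↔ w ∈ (↑s : Set V) := by rw [hs]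
    simpa using this
  have hd : G.degree v = s.card := by rw [← hN]; rfl
  simp only [signlessLaplacian, Matrix.add_mulVec, Pi.add_apply, Matrix.mulVec_diagonal,
    SimpleGraph.adjMatrix_mulVec_apply, Pi.smul_apply, smul_eq_mul] at h
  rw [← h, ← hN, ← SimpleGraph.card_neighborFinset_eq_degree]

/-- for the maximal outer-planar graph of type `D_1` with `Δ = n - 3`,
if `n ≥ 12` then the Perron eigenvector satisfies `x_k + x_1 > x_2 + x_{n-1}`. -/
theorem stmt_10 (n k : ℕ) (hn : 7 ≤ n) (hk1 : 4 ≤ k) (hk2 : k ≤ n - 3)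
    (G : SimpleGraph (Fin n))
    (h0 : G.neighborSet ⟨0, by omega⟩ = {⟨1, by omega⟩, ⟨n - 1, by omega⟩})
    (h1 : G.neighborSet ⟨1, by omega⟩ =
      {⟨0, by omega⟩, ⟨2, by omega⟩, ⟨n - 1, by omega⟩})
    (h2 : G.neighborSet ⟨2, by omega⟩ =
      {⟨1, by omega⟩, ⟨3, by omega⟩, ⟨k, by omega⟩, ⟨n - 1, by omega⟩})
    (hlast : G.neighborSet ⟨n - 1, by omega⟩ =
      {⟨0, by omega⟩, ⟨1, by omega⟩, ⟨2, by omega⟩, ⟨k, by omega⟩, ⟨n - 2, by omega⟩})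
    (hk' : G.neighborSet ⟨k, by omega⟩ =
      {u : Fin n | 2 ≤ u.val ∧ u ≠ ⟨k, by omega⟩})
    (x : Fin n → ℝ) (hpos : ∀ i, 0 < x i)
    (heig : (signlessLaplacian G).mulVec x = qIndex G • x)
    (hn12 : 12 ≤ n) :
    x ⟨2, by omega⟩ + x ⟨n - 1, by omega⟩ < x ⟨k, by omega⟩ + x ⟨1, by omega⟩ := by
  classical
  generalize qIndex G = q at heig
  have key := eig_eq_aux G x q heig
  have e0 := key _ {⟨1, by omega⟩, ⟨n - 1, by omega⟩} (by rw [h0]; simp)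
  have e1 := key _ {⟨0, by omega⟩, ⟨2, by omega⟩, ⟨n - 1, by omega⟩} (by rw [h1]; simp)
  have e2 := key _ {⟨1, by omega⟩, ⟨3, by omega⟩, ⟨k, by omega⟩, ⟨n - 1, by omega⟩}
    (by rw [h2]; simp)
  have el := key _ {⟨0, by omega⟩, ⟨1, by omega⟩, ⟨2, by omega⟩, ⟨k, by omega⟩,
    ⟨n - 2, by omega⟩} (by rw [hlast]; simp)
  rw [Finset.card_eq_of_equiv_fin (n := 2) (Finset.equivFinOfCardEq (by
    repeat rw [Finset.card_insert_of_notMem (by simp; try omega)]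
    simp))] at e0
  rw [Finset.sum_insert (by simp; try omega), Finset.sum_singleton] at e0
  rw [Finset.card_eq_of_equiv_fin (n := 3) (Finset.equivFinOfCardEq (by
    repeat rw [Finset.card_insert_of_notMem (by simp; try omega)]
    simp))] at e1
  rw [Finset.sum_insert (by simp; try omega), Finset.sum_insert (by simp; try omega),
    Finset.sum_singleton] at e1
  rw [Finset.card_eq_of_equiv_fin (n := 4) (Finset.equivFinOfCardEq (by
    repeat rw [Finset.card_insert_of_notMem (by simp; try omega)]
    simp))] at e2
  rw [Finset.sum_insert (by simp; try omega), Finset.sum_insert (by simp; try omega),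
    Finset.sum_insert (by simp; try omega), Finset.sum_singleton] at e2
  rw [Finset.card_eq_of_equiv_fin (n := 5) (Finset.equivFinOfCardEq (by
    repeat rw [Finset.card_insert_of_notMem (by simp; try omega)]
    simp))] at el
  rw [Finset.sum_insert (by simp; try omega), Finset.sum_insert (by simp; try omega),
    Finset.sum_insert (by simp; try omega), Finset.sum_insert (by simp; try omega),
    Finset.sum_singleton] at el
  set K : Fin n := ⟨k, by omega⟩ with hK
  have adjK : ∀ u : Fin n, G.Adj K u ↔ 2 ≤ u.val ∧ u ≠ K := by
    intro u
    have : u ∈ G.neighborSet K ↔ u ∈ {u : Fin n | 2 ≤ u.val ∧ u ≠ K} := by rw [hk']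
    simpa using this
  have eN := fun v => key v (G.neighborFinset v) (by simp)
  -- closed neighbourhoods of inner vertices lie in that of `K`
  have hcardK : (G.neighborFinset K).card = n - 3 := by
    have : G.neighborFinset K =
        ((Finset.univ.erase K).erase ⟨0, by omega⟩).erase ⟨1, by omega⟩ := by
      ext u
      simp only [SimpleGraph.mem_neighborFinset, adjK, Finset.mem_erase, Finset.mem_univ,
        Fin.ext_iff, ne_eq, and_true]
      omega
    rw [this, Finset.card_erase_of_mem (by simp [hK, Fin.ext_iff]; try omega),
      Finset.card_erase_of_mem (by simp [hK, Fin.ext_iff]; try omega),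
      Finset.card_erase_of_mem (by simp)]
    simp
    omega
  have eK := eN K
  rw [hcardK] at eK
  have hdeg : ∀ v, ((G.neighborFinset v).card : ℝ) ≤ q := by
    intro v
    have h : 0 ≤ ∑ w ∈ G.neighborFinset v, x w :=
      Finset.sum_nonneg fun w _ => (hpos w).le
    have := eN v
    have hv := hpos v
    by_contra hc
    push Not at hc
    nlinarith
  have hqK : ((n - 3 : ℕ) : ℝ) ≤ q := by rw [← hcardK]; exact hdeg K
  have hm : (9 : ℝ) ≤ ((n - 3 : ℕ) : ℝ) := by
    exact_mod_cast (by omega : 9 ≤ n - 3)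
  set m : ℝ := ((n - 3 : ℕ) : ℝ) with hmdef
  have hxK := hpos K
  -- neighbours of `K` are bounded below
  have hlow : ∀ u ∈ G.neighborFinset K, x K / (q - 1) ≤ x u := by
    intro u hu
    rw [SimpleGraph.mem_neighborFinset] at hu
    have hKu : K ∈ G.neighborFinset u := by
      rw [SimpleGraph.mem_neighborFinset]; exact hu.symm
    have h1 : x K ≤ ∑ w ∈ G.neighborFinset u, x w :=
      Finset.single_le_sum (f := x) (fun w _ => (hpos w).le) hKu
    have h2 : (1 : ℝ) ≤ ((G.neighborFinset u).card : ℝ) := by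
      exact_mod_cast Finset.card_pos.mpr ⟨K, hKu⟩
    rw [div_le_iff₀ (by linarith)]
    have := eN u
    have hu := hpos u
    nlinarith
  have hq10 : 10 ≤ q := by
    have h := Finset.card_nsmul_le_sum _ _ _ hlow
    rw [hcardK, nsmul_eq_mul, ← hmdef] at h
    have h2 : m * (x K / (q - 1)) ≤ (q - m) * x K := by linarith
    have h3 : m * x K ≤ ((q - m) * (q - 1)) * x K := by
      have h4 : m * (x K / (q - 1)) = m * x K / (q - 1) := by ring
      rw [h4, div_le_iff₀ (by linarith)] at h2
      linarith
    have h5 : m ≤ (q - m) * (q - 1) := le_of_mul_le_mul_right h3 hxK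
    nlinarith
  have hup : ∀ u : Fin n, 3 ≤ u.val → u.val ≤ n - 2 → x u ≤ x K := by
    intro u hu3 hun
    by_cases huK : u = K
    · rw [huK]
    have hsub : insert u (G.neighborFinset u) ⊆ insert K (G.neighborFinset K) := by
      intro w hw
      simp only [Finset.mem_insert, SimpleGraph.mem_neighborFinset, adjK] at hw ⊢
      by_cases hwK : w = K
      · exact Or.inl hwK
      refine Or.inr ⟨?_, hwK⟩
      rcases hw with rfl | hw
      · omega
      by_contra hlt
      have hw' := hw.symm
      rcases (by omega : w.val = 0 ∨ w.val = 1) with h | h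
      · have hw0 : w = ⟨0, by omega⟩ := Fin.ext h
        have : u ∈ G.neighborSet ⟨0, by omega⟩ := by rw [← hw0]; exact hw'
        rw [h0] at this
        simp [Fin.ext_iff] at this
        omega
      · have hw0 : w = ⟨1, by omega⟩ := Fin.ext h
        have : u ∈ G.neighborSet ⟨1, by omega⟩ := by rw [← hw0]; exact hw'
        rw [h1] at this
        simp [Fin.ext_iff] at this
        omega
    have hc := Finset.card_le_card hsub
    rw [Finset.card_insert_of_notMem (by simp), Finset.card_insert_of_notMem (by simp),
      hcardK] at hc
    have hc' : ((G.neighborFinset u).card : ℝ) ≤ m := by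
      rw [hmdef]
      exact_mod_cast (by omega : (G.neighborFinset u).card ≤ n - 3)
    have hs := Finset.sum_le_sum_of_subset_of_nonneg (f := x) hsub
      (fun w _ _ => (hpos w).le)
    rw [Finset.sum_insert (by simp), Finset.sum_insert (by simp)] at hs
    have h3 := eN u
    have hu := hpos u
    by_contra hlt
    push Not at hlt
    nlinarith
  have u3 := hup ⟨3, by omega⟩ (by simp) (by simp; omega)
  have ul := hup ⟨n - 2, by omega⟩ (by simp; omega) (by simp)
  push_cast at e0 e1 e2 el
  have p0 := hpos ⟨0, by omega⟩
  have p1 := hpos ⟨1, by omega⟩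
  have p2 := hpos ⟨2, by omega⟩
  have pl := hpos ⟨n - 1, by omega⟩
  have m0 := mul_le_mul_of_nonneg_right hq10 p0.le
  have m1 := mul_le_mul_of_nonneg_right hq10 p1.le
  have m2 := mul_le_mul_of_nonneg_right hq10 p2.le
  have ml := mul_le_mul_of_nonneg_right hq10 pl.le
  by_contra hcon
  push Not at hcon
  linarith
end

section
/- Under the stated hypotheses on G, the eigenvector x satisfies x_k > x_0 and x_k > x_2. -/
open Matrix

theorem signless_eq {V : Type*} [Fintype V] [DecidableEq V] (G : SimpleGraph V) (x : V → ℝ) (q : ℝ)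
    (heig : (signlessLaplacian G).mulVec x = q • x) (v : V) (s : Finset V)
    (hs : ∀ u, u ∈ s ↔ u ∈ G.neighborSet v) : ∑ u ∈ s, (x v + x u) = q * x v := by
  classical
  have h := congrFun heig v
  have hs' : s = G.neighborFinset v := by
    ext u; rw [hs]; simp
  subst hs'
  rw [Finset.sum_add_distrib, Finset.sum_const, SimpleGraph.card_neighborFinset_eq_degree]
  unfold signlessLaplacian at h
  simp only [Matrix.add_mulVec, Pi.add_apply, Pi.smul_apply, smul_eq_mul,
    Matrix.mulVec_diagonal, SimpleGraph.adjMatrix_mulVec_apply] at h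
  rw [nsmul_eq_mul, ← h]

/-- for the maximal outer-planar graph of type `D_2` with `Δ = n - 3`,
the Perron eigenvector satisfies `x_k > x_0` and `x_k > x_2`. -/
theorem stmt_12 (n k : ℕ) (hn : 8 ≤ n) (hk1 : 4 ≤ k) (hk2 : k ≤ n - 3)
    (G : SimpleGraph (Fin n))
    (h0 : G.neighborSet ⟨0, by omega⟩ = {⟨1, by omega⟩, ⟨n - 1, by omega⟩})
    (h1 : G.neighborSet ⟨1, by omega⟩ =
      {⟨0, by omega⟩, ⟨2, by omega⟩, ⟨3, by omega⟩, ⟨k, by omega⟩, ⟨n - 1, by omega⟩})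
    (h2 : G.neighborSet ⟨2, by omega⟩ = {⟨1, by omega⟩, ⟨3, by omega⟩})
    (hlast : G.neighborSet ⟨n - 1, by omega⟩ =
      {⟨0, by omega⟩, ⟨1, by omega⟩, ⟨k, by omega⟩, ⟨n - 2, by omega⟩})
    (hk' : G.neighborSet ⟨k, by omega⟩ =
      insert ⟨1, by omega⟩ {u : Fin n | 3 ≤ u.val ∧ u ≠ ⟨k, by omega⟩})
    (x : Fin n → ℝ) (hpos : ∀ i, 0 < x i)
    (heig : (signlessLaplacian G).mulVec x = qIndex G • x) :
    x ⟨0, by omega⟩ < x ⟨k, by omega⟩ ∧ x ⟨2, by omega⟩ < x ⟨k, by omega⟩ := by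
  classical
  generalize qIndex G = q at heig
  have e0 := signless_eq G x q heig ⟨0, by omega⟩ {⟨1, by omega⟩, ⟨n - 1, by omega⟩}
    (by intro u; rw [h0]; simp)
  have e2 := signless_eq G x q heig ⟨2, by omega⟩ {⟨1, by omega⟩, ⟨3, by omega⟩}
    (by intro u; rw [h2]; simp)
  have ek := signless_eq G x q heig ⟨k, by omega⟩ (G.neighborFinset ⟨k, by omega⟩)
    (by intro u; simp)
  have hsub : ({⟨1, by omega⟩, ⟨3, by omega⟩, ⟨n - 1, by omega⟩} : Finset (Fin n)) ⊆
      G.neighborFinset ⟨k, by omega⟩ := by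
    intro u hu
    rw [SimpleGraph.mem_neighborFinset, ← SimpleGraph.mem_neighborSet, hk']
    simp only [Finset.mem_insert, Finset.mem_singleton] at hu
    rcases hu with rfl | rfl | rfl
    · left; rfl
    · right; simp [Fin.ext_iff]; omega
    · right; simp [Fin.ext_iff]; omega
  have hle := Finset.sum_le_sum_of_subset_of_nonneg (f := fun u => x ⟨k, by omega⟩ + x u) hsub
    (fun u _ _ => (add_pos (hpos _) (hpos u)).le)
  rw [ek] at hle
  rw [Finset.sum_insert (by simp [Fin.ext_iff]; omega),
    Finset.sum_insert (by simp [Fin.ext_iff]; omega), Finset.sum_singleton] at hle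
  rw [Finset.sum_pair (by simp [Fin.ext_iff]; omega)] at e0
  rw [Finset.sum_pair (by simp [Fin.ext_iff])] at e2
  have p0 := hpos ⟨0, by omega⟩
  have p1 := hpos ⟨1, by omega⟩
  have p3 := hpos ⟨3, by omega⟩
  have pl := hpos ⟨n - 1, by omega⟩
  have pk := hpos ⟨k, by omega⟩
  have hq : 0 < q - 2 := by
    by_contra hc
    nlinarith
  constructor
  · refine lt_of_mul_lt_mul_left ?_ hq.le
    linarith
  · refine lt_of_mul_lt_mul_left ?_ hq.le
    linarith
end

section
/- Under the stated hypotheses on G, if n ≥ 10 then the eigenvector x satisfies x_k > x_1. -/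
open Matrix

theorem sl_row {n : ℕ} (G : SimpleGraph (Fin n)) (x : Fin n → ℝ) (v : Fin n)
    (S : Finset (Fin n)) (hS : ∀ u, u ∈ G.neighborSet v ↔ u ∈ S) :
    (signlessLaplacian G).mulVec x v = (S.card : ℝ) * x v + ∑ u ∈ S, x u := by
  classical
  have hN : ∀ inst : Fintype (G.neighborSet v), @SimpleGraph.neighborFinset _ G v inst = S := by
    intro inst
    ext u
    rw [SimpleGraph.mem_neighborFinset, ← SimpleGraph.mem_neighborSet, hS]
  unfold signlessLaplacian
  simp only [Matrix.add_mulVec, Pi.add_apply, Matrix.mulVec_diagonal,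
    SimpleGraph.adjMatrix_mulVec_apply, ← SimpleGraph.card_neighborFinset_eq_degree, hN]

/-- for the maximal outer-planar graph of type `D_2` with `Δ = n - 3`,
if `n ≥ 10` then the Perron eigenvector satisfies `x_k > x_1`. -/
theorem stmt_13 (n k : ℕ) (hn : 8 ≤ n) (hk1 : 4 ≤ k) (hk2 : k ≤ n - 3)
    (G : SimpleGraph (Fin n))
    (h0 : G.neighborSet ⟨0, by omega⟩ = {⟨1, by omega⟩, ⟨n - 1, by omega⟩})
    (h1 : G.neighborSet ⟨1, by omega⟩ =
      {⟨0, by omega⟩, ⟨2, by omega⟩, ⟨3, by omega⟩, ⟨k, by omega⟩, ⟨n - 1, by omega⟩})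
    (h2 : G.neighborSet ⟨2, by omega⟩ = {⟨1, by omega⟩, ⟨3, by omega⟩})
    (hlast : G.neighborSet ⟨n - 1, by omega⟩ =
      {⟨0, by omega⟩, ⟨1, by omega⟩, ⟨k, by omega⟩, ⟨n - 2, by omega⟩})
    (hk' : G.neighborSet ⟨k, by omega⟩ =
      insert ⟨1, by omega⟩ {u : Fin n | 3 ≤ u.val ∧ u ≠ ⟨k, by omega⟩})
    (x : Fin n → ℝ) (hpos : ∀ i, 0 < x i)
    (heig : (signlessLaplacian G).mulVec x = qIndex G • x)
    (hn10 : 10 ≤ n) :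
    x ⟨1, by omega⟩ < x ⟨k, by omega⟩ := by
  have e := fun i => congrFun heig i
  simp only [Pi.smul_apply, smul_eq_mul] at e
  generalize qIndex G = q at e
  have r0 := e ⟨0, by omega⟩
  rw [sl_row G x _ {⟨1, by omega⟩, ⟨n - 1, by omega⟩} (by intro u; rw [h0]; simp)] at r0
  have r1 := e ⟨1, by omega⟩
  rw [sl_row G x _ {⟨0, by omega⟩, ⟨2, by omega⟩, ⟨3, by omega⟩, ⟨k, by omega⟩,
    ⟨n - 1, by omega⟩} (by intro u; rw [h1]; simp)] at r1
  have r2 := e ⟨2, by omega⟩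
  rw [sl_row G x _ {⟨1, by omega⟩, ⟨3, by omega⟩} (by intro u; rw [h2]; simp)] at r2
  have rk := e ⟨k, by omega⟩
  have hc : (({⟨0, by omega⟩, ⟨2, by omega⟩, ⟨k, by omega⟩} : Finset (Fin n))ᶜ).card = n - 3 := by
    rw [Finset.card_compl, Fintype.card_fin]
    congr 1
    rw [Finset.card_insert_of_notMem, Finset.card_insert_of_notMem, Finset.card_singleton] <;>
      simp [Fin.ext_iff] <;> omega
  rw [sl_row G x _ ({⟨0, by omega⟩, ⟨2, by omega⟩, ⟨k, by omega⟩} : Finset (Fin n))ᶜ (by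
    intro u; rw [hk']; simp [Fin.ext_iff]; omega), hc] at rk
  have hs : x ⟨1, by omega⟩ + (x ⟨3, by omega⟩ + x ⟨n - 1, by omega⟩) ≤
      ∑ u ∈ ({⟨0, by omega⟩, ⟨2, by omega⟩, ⟨k, by omega⟩} : Finset (Fin n))ᶜ, x u := by
    have : ∑ u ∈ ({⟨1, by omega⟩, ⟨3, by omega⟩, ⟨n - 1, by omega⟩} : Finset (Fin n)), x u =
        x ⟨1, by omega⟩ + (x ⟨3, by omega⟩ + x ⟨n - 1, by omega⟩) := by
      rw [Finset.sum_insert, Finset.sum_insert, Finset.sum_singleton] <;>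
        simp [Fin.ext_iff] <;> omega
    rw [← this]
    apply Finset.sum_le_sum_of_subset_of_nonneg
    · intro u
      simp [Fin.ext_iff]
      omega
    · intro i _ _
      exact (hpos i).le
  rw [Finset.card_insert_of_notMem (by simp [Fin.ext_iff]; omega), Finset.card_singleton,
    Finset.sum_insert (by simp [Fin.ext_iff]; omega), Finset.sum_singleton] at r0
  rw [Finset.card_insert_of_notMem (by simp [Fin.ext_iff]), Finset.card_singleton,
    Finset.sum_insert (by simp [Fin.ext_iff]), Finset.sum_singleton] at r2
  rw [Finset.card_insert_of_notMem (by simp [Fin.ext_iff]; omega),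
    Finset.card_insert_of_notMem (by simp [Fin.ext_iff]; omega),
    Finset.card_insert_of_notMem (by simp [Fin.ext_iff]; omega),
    Finset.card_insert_of_notMem (by simp [Fin.ext_iff]; omega), Finset.card_singleton,
    Finset.sum_insert (by simp [Fin.ext_iff]; omega),
    Finset.sum_insert (by simp [Fin.ext_iff]; omega),
    Finset.sum_insert (by simp [Fin.ext_iff]; omega),
    Finset.sum_insert (by simp [Fin.ext_iff]; omega), Finset.sum_singleton] at r1
  rw [Nat.cast_sub (by omega)] at rk
  generalize (∑ u ∈ ({⟨0, by omega⟩, ⟨2, by omega⟩, ⟨k, by omega⟩} : Finset (Fin n))ᶜ, x u) = T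
    at rk hs
  have p0 := hpos ⟨0, by omega⟩
  have p1 := hpos ⟨1, by omega⟩
  have p2 := hpos ⟨2, by omega⟩
  have p3 := hpos ⟨3, by omega⟩
  have pk := hpos ⟨k, by omega⟩
  have pl := hpos ⟨n - 1, by omega⟩
  generalize x ⟨0, _⟩ = x0 at *
  generalize x ⟨1, _⟩ = x1 at *
  generalize x ⟨2, _⟩ = x2 at *
  generalize x ⟨3, _⟩ = x3 at *
  generalize x ⟨k, _⟩ = xk at *
  generalize x ⟨n - 1, _⟩ = xl at *
  have hn' : (10 : ℝ) ≤ n := by exact_mod_cast hn10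
  generalize (n : ℝ) = N at *
  push_cast at r0 r1 r2 rk
  have hq : N - 3 < q := by
    by_contra h
    have := mul_le_mul_of_nonneg_right (not_lt.mp h) pk.le
    linarith
  have ht : x0 + x2 < x1 := by
    have h1 : (q - 1) * (x0 + x2) < (q - 1) * x1 := by linarith
    exact lt_of_mul_lt_mul_left h1 (by linarith)
  have hN : 0 ≤ (N - 10) * x1 := mul_nonneg (by linarith) p1.le
  have hf : (q - N + 4) * x1 < (q - N + 4) * xk := by linarith
  exact lt_of_mul_lt_mul_left hf (by linarith)
end

section
/- Under the stated hypotheses on G, if n ≥ 13 then the eigenvector x satisfies x_k + x_0 > x_1 + x_{n−1}. -/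
open Matrix

/-- Row `v` of the eigenvalue equation, as a sum over the neighbours of `v`. -/
lemma row_eq_s15 {n : ℕ} (G : SimpleGraph (Fin n)) (x : Fin n → ℝ) (q : ℝ)
    (heig : (signlessLaplacian G).mulVec x = q • x) (v : Fin n) (S : Finset (Fin n))
    (hS : ∀ w, w ∈ S ↔ G.Adj v w) : q * x v = ∑ w ∈ S, (x v + x w) := by
  classical
  have h := congrFun heig v
  unfold signlessLaplacian at h
  simp only [Matrix.add_mulVec, Pi.add_apply, Matrix.mulVec_diagonal,
    SimpleGraph.adjMatrix_mulVec_apply, Pi.smul_apply, smul_eq_mul] at h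
  rw [← h, Finset.sum_add_distrib, Finset.sum_const, nsmul_eq_mul]
  have e : S = (G.neighborFinset v) := by
    ext w
    simp [hS]
  subst e
  rw [SimpleGraph.card_neighborFinset_eq_degree]

/-- Comparison of two sums over nested sets. -/
lemma nested_le {n : ℕ} (x : Fin n → ℝ) (hpos : ∀ i, 0 < x i) (A B : Finset (Fin n))
    (hAB : A ⊆ B) (y z : ℝ) (hy : 0 < y) :
    ∑ w ∈ A, (y + x w) - ∑ w ∈ B, (z + x w) ≤ (B.card : ℝ) * (y - z) := by
  have h1 : ∑ w ∈ A, (y + x w) ≤ ∑ w ∈ B, (y + x w) :=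
    Finset.sum_le_sum_of_subset_of_nonneg hAB (fun i _ _ => by have := hpos i; linarith)
  have h2 : ∑ w ∈ B, (y + x w) - ∑ w ∈ B, (z + x w) = (B.card : ℝ) * (y - z) := by
    simp only [Finset.sum_add_distrib, Finset.sum_const, nsmul_eq_mul]
    ring
  linarith

lemma card_lt {n : ℕ} (x : Fin n → ℝ) (hpos : ∀ i, 0 < x i) (B : Finset (Fin n)) (z : ℝ) :
    (B.card : ℝ) * z ≤ ∑ w ∈ B, (z + x w) := by
  rw [Finset.sum_add_distrib, Finset.sum_const, nsmul_eq_mul]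
  have := Finset.sum_nonneg (fun i (_ : i ∈ B) => (hpos i).le)
  linarith

/-- The final arithmetic. -/
lemma final_arith (q a b c d e f g : ℝ) (hq : 10 ≤ q) (hb : 0 < b) (hf : 0 < f)
    (E0 : q * a = (a + b) + (a + f))
    (E1 : q * b = (b + a) + (b + c) + (b + d) + (b + e) + (b + f))
    (E2 : q * c = (c + b) + (c + d))
    (E3 : q * f = (f + a) + (f + b) + (f + e) + (f + g))
    (hd : d ≤ e) (hg : g ≤ e) : b + f < e + a := by
  obtain ⟨t, rfl⟩ : ∃ t, q = t + 2 := ⟨q - 2, by ring⟩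
  have ht : 8 ≤ t := by linarith
  have ha : t * a = b + f := by linarith
  have hc : t * c = b + d := by linarith
  have h1 : (t - 4) * (b + f) ≤ 2 * a + c + 4 * e := by nlinarith
  have h2 : t * ((t - 4) * (b + f)) ≤ t * (2 * a + c + 4 * e) :=
    mul_le_mul_of_nonneg_left h1 (by linarith)
  have h3 : (t ^ 2 - 4 * t - 3) * (b + f) ≤ (4 * t + 1) * e := by nlinarith
  by_contra hcon
  have h4 : t * (e + a) ≤ t * (b + f) :=
    mul_le_mul_of_nonneg_left (not_lt.mp hcon) (by linarith)
  have h5 : t * e ≤ (t - 1) * (b + f) := by nlinarith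
  have h6 : t * ((t ^ 2 - 4 * t - 3) * (b + f)) ≤ t * ((4 * t + 1) * e) :=
    mul_le_mul_of_nonneg_left h3 (by linarith)
  have h7 : (4 * t + 1) * (t * e) ≤ (4 * t + 1) * ((t - 1) * (b + f)) :=
    mul_le_mul_of_nonneg_left h5 (by linarith)
  have h8 : (t ^ 2 * (t - 8) + 1) * (b + f) ≤ 0 := by nlinarith
  have h9 : 0 < (t ^ 2 * (t - 8) + 1) * (b + f) := by
    have : 0 ≤ t ^ 2 * (t - 8) := mul_nonneg (sq_nonneg t) (by linarith)
    positivity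
  linarith

set_option maxHeartbeats 4000000 in
/-- for the maximal outer-planar graph of type `D_2` with `Δ = n - 3`,
if `n ≥ 13` then the Perron eigenvector satisfies `x_k + x_0 > x_1 + x_{n-1}`. -/
theorem stmt_15 (n k : ℕ) (hn : 8 ≤ n) (hk1 : 4 ≤ k) (hk2 : k ≤ n - 3)
    (G : SimpleGraph (Fin n))
    (h0 : G.neighborSet ⟨0, by omega⟩ = {⟨1, by omega⟩, ⟨n - 1, by omega⟩})
    (h1 : G.neighborSet ⟨1, by omega⟩ =
      {⟨0, by omega⟩, ⟨2, by omega⟩, ⟨3, by omega⟩, ⟨k, by omega⟩, ⟨n - 1, by omega⟩})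
    (h2 : G.neighborSet ⟨2, by omega⟩ = {⟨1, by omega⟩, ⟨3, by omega⟩})
    (hlast : G.neighborSet ⟨n - 1, by omega⟩ =
      {⟨0, by omega⟩, ⟨1, by omega⟩, ⟨k, by omega⟩, ⟨n - 2, by omega⟩})
    (hk' : G.neighborSet ⟨k, by omega⟩ =
      insert ⟨1, by omega⟩ {u : Fin n | 3 ≤ u.val ∧ u ≠ ⟨k, by omega⟩})
    (x : Fin n → ℝ) (hpos : ∀ i, 0 < x i)
    (heig : (signlessLaplacian G).mulVec x = qIndex G • x)
    (hn13 : 13 ≤ n) :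
    x ⟨1, by omega⟩ + x ⟨n - 1, by omega⟩ < x ⟨k, by omega⟩ + x ⟨0, by omega⟩ := by
  classical
  generalize qIndex G = q at heig
  have A0 : ∀ w, G.Adj ⟨0, by omega⟩ w ↔ w = ⟨1, by omega⟩ ∨ w = ⟨n - 1, by omega⟩ := by
    intro w; rw [← SimpleGraph.mem_neighborSet, h0]; simp
  have A1 : ∀ w, G.Adj ⟨1, by omega⟩ w ↔ w = ⟨0, by omega⟩ ∨ w = ⟨2, by omega⟩ ∨
      w = ⟨3, by omega⟩ ∨ w = ⟨k, by omega⟩ ∨ w = ⟨n - 1, by omega⟩ := by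
    intro w; rw [← SimpleGraph.mem_neighborSet, h1]; simp
  have A2 : ∀ w, G.Adj ⟨2, by omega⟩ w ↔ w = ⟨1, by omega⟩ ∨ w = ⟨3, by omega⟩ := by
    intro w; rw [← SimpleGraph.mem_neighborSet, h2]; simp
  have AL : ∀ w, G.Adj ⟨n - 1, by omega⟩ w ↔ w = ⟨0, by omega⟩ ∨ w = ⟨1, by omega⟩ ∨
      w = ⟨k, by omega⟩ ∨ w = ⟨n - 2, by omega⟩ := by
    intro w; rw [← SimpleGraph.mem_neighborSet, hlast]; simp
  have AK : ∀ w, G.Adj ⟨k, by omega⟩ w ↔ w = ⟨1, by omega⟩ ∨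
      (3 ≤ w.val ∧ w ≠ ⟨k, by omega⟩) := by
    intro w; rw [← SimpleGraph.mem_neighborSet, hk']; simp
  clear h0 h1 h2 hlast hk'
  have E0 := row_eq_s15 G x q heig ⟨0, by omega⟩ {⟨1, by omega⟩, ⟨n - 1, by omega⟩}
    (by intro w; rw [A0]; simp)
  have E1 := row_eq_s15 G x q heig ⟨1, by omega⟩ {⟨0, by omega⟩, ⟨2, by omega⟩, ⟨3, by omega⟩,
    ⟨k, by omega⟩, ⟨n - 1, by omega⟩} (by intro w; rw [A1]; simp)
  have E2 := row_eq_s15 G x q heig ⟨2, by omega⟩ {⟨1, by omega⟩, ⟨3, by omega⟩}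
    (by intro w; rw [A2]; simp)
  have E3 := row_eq_s15 G x q heig ⟨n - 1, by omega⟩ {⟨0, by omega⟩, ⟨1, by omega⟩,
    ⟨k, by omega⟩, ⟨n - 2, by omega⟩} (by intro w; rw [AL]; simp)
  rw [Finset.sum_pair (by simp only [ne_eq, Fin.ext_iff]; omega)] at E0 E2
  rw [Finset.sum_insert (by simp; omega), Finset.sum_insert (by simp; omega),
    Finset.sum_insert (by simp; omega), Finset.sum_pair (by simp only [ne_eq, Fin.ext_iff]; omega)] at E1
  rw [Finset.sum_insert (by simp; omega), Finset.sum_insert (by simp; omega),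
    Finset.sum_pair (by simp only [ne_eq, Fin.ext_iff]; omega)] at E3
  obtain ⟨N, hN⟩ : ∃ N : Fin n → Finset (Fin n), ∀ v w, w ∈ N v ↔ G.Adj v w :=
    ⟨fun v => Finset.univ.filter (fun w => G.Adj v w), fun v w => by simp⟩
  have EN := fun v => row_eq_s15 G x q heig v (N v) (hN v)
  have p0 := hpos ⟨0, by omega⟩
  have p1 := hpos ⟨1, by omega⟩
  have p2 := hpos ⟨2, by omega⟩
  have p3 := hpos ⟨3, by omega⟩
  have pk := hpos ⟨k, by omega⟩
  have pl := hpos ⟨n - 1, by omega⟩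
  have pm := hpos ⟨n - 2, by omega⟩
  -- lower bound for the Q-index
  have hq : 10 ≤ q := by
    have hc : 10 ≤ (N ⟨k, by omega⟩).card := by
      have hsub : insert (⟨1, by omega⟩ : Fin n)
          ((Finset.Ici (⟨3, by omega⟩ : Fin n)).erase ⟨k, by omega⟩) ⊆ N ⟨k, by omega⟩ := by
        intro w hw
        rw [hN, AK]
        simp only [Finset.mem_insert, Finset.mem_erase, Finset.mem_Ici, Fin.le_def] at hw
        tauto
      have h := Finset.card_le_card hsub
      rw [Finset.card_insert_of_notMem (by simp), Finset.card_erase_of_mem (by simp; omega),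
        Fin.card_Ici] at h
      simp only at h
      omega
    have hc' : (10 : ℝ) ≤ ((N ⟨k, by omega⟩).card : ℝ) := by exact_mod_cast hc
    have h := card_lt x hpos (N ⟨k, by omega⟩) (x ⟨k, by omega⟩)
    rw [← EN] at h
    exact hc'.trans (le_of_mul_le_mul_right h pk)
  -- comparison of `v_{n-2}` and `v_k`
  have hg : x ⟨n - 2, by omega⟩ ≤ x ⟨k, by omega⟩ := by
    have m1 : (⟨k, by omega⟩ : Fin n) ∈ N ⟨n - 2, by omega⟩ := by
      rw [hN, G.adj_comm, AK]; right; simp; omega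
    have m2 : (⟨n - 2, by omega⟩ : Fin n) ∈ N ⟨k, by omega⟩ := by
      rw [hN, G.adj_comm, ← hN]; exact m1
    have F1 := EN ⟨n - 2, by omega⟩
    have F2 := EN ⟨k, by omega⟩
    rw [← Finset.add_sum_erase _ _ m1] at F1
    rw [← Finset.add_sum_erase _ _ m2] at F2
    have hs : (N ⟨n - 2, by omega⟩).erase ⟨k, by omega⟩ ⊆
        (N ⟨k, by omega⟩).erase ⟨n - 2, by omega⟩ := by
      intro w hw
      rw [Finset.mem_erase, hN] at hw
      rw [Finset.mem_erase, hN, AK]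
      obtain ⟨hw1, hw2⟩ := hw
      refine ⟨hw2.ne', Or.inr ⟨?_, hw1⟩⟩
      by_contra hlt
      have h012 : w = ⟨0, by omega⟩ ∨ w = ⟨1, by omega⟩ ∨ w = ⟨2, by omega⟩ := by
        simp only [Fin.ext_iff]; omega
      have hw3 := hw2.symm
      rcases h012 with h | h | h
      · rw [h, A0] at hw3; simp only [Fin.ext_iff] at hw3; omega
      · rw [h, A1] at hw3; simp only [Fin.ext_iff] at hw3; omega
      · rw [h, A2] at hw3; simp only [Fin.ext_iff] at hw3; omega
    have hle := nested_le x hpos _ _ hs _ (x ⟨k, by omega⟩) pm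
    have hcd := card_lt x hpos ((N ⟨k, by omega⟩).erase ⟨n - 2, by omega⟩) (x ⟨k, by omega⟩)
    set C : ℝ := (((N ⟨k, by omega⟩).erase ⟨n - 2, by omega⟩).card : ℝ)
    have hqC : 0 < q - C := by
      by_contra hcon
      nlinarith
    by_contra hcon
    have := mul_pos hqC (sub_pos.mpr (not_le.mp hcon))
    nlinarith
  -- comparison of `v_3` and `v_k`
  have hd : x ⟨3, by omega⟩ ≤ x ⟨k, by omega⟩ := by
    have m1 : (⟨k, by omega⟩ : Fin n) ∈ N ⟨3, by omega⟩ := by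
      rw [hN, G.adj_comm, AK]; right; simp; omega
    have m2 : (⟨3, by omega⟩ : Fin n) ∈ N ⟨k, by omega⟩ := by
      rw [hN, G.adj_comm, ← hN]; exact m1
    have m3 : (⟨2, by omega⟩ : Fin n) ∈ (N ⟨3, by omega⟩).erase ⟨k, by omega⟩ := by
      rw [Finset.mem_erase, hN, G.adj_comm, A2]
      refine ⟨?_, Or.inr rfl⟩
      simp only [ne_eq, Fin.ext_iff]; omega
    have m4 : (⟨n - 1, by omega⟩ : Fin n) ∈ (N ⟨k, by omega⟩).erase ⟨3, by omega⟩ := by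
      rw [Finset.mem_erase, hN, AK]
      simp only [ne_eq, Fin.ext_iff]; omega
    have F1 := EN ⟨3, by omega⟩
    have F2 := EN ⟨k, by omega⟩
    rw [← Finset.add_sum_erase _ _ m1, ← Finset.add_sum_erase _ _ m3] at F1
    rw [← Finset.add_sum_erase _ _ m2, ← Finset.add_sum_erase _ _ m4] at F2
    have hs : ((N ⟨3, by omega⟩).erase ⟨k, by omega⟩).erase ⟨2, by omega⟩ ⊆
        ((N ⟨k, by omega⟩).erase ⟨3, by omega⟩).erase ⟨n - 1, by omega⟩ := by
      intro w hw
      rw [Finset.mem_erase, Finset.mem_erase, hN] at hw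
      rw [Finset.mem_erase, Finset.mem_erase, hN, AK]
      obtain ⟨hw0, hw1, hw2⟩ := hw
      have hw3 := hw2.symm
      refine ⟨?_, hw2.ne', ?_⟩
      · rintro rfl
        rw [AL] at hw3; simp only [Fin.ext_iff] at hw3; omega
      by_contra hlt
      have h012 : w = ⟨0, by omega⟩ := by
        simp only [Fin.ext_iff, ne_eq] at hlt hw0 hw1 ⊢; omega
      rw [h012, A0] at hw3; simp only [Fin.ext_iff] at hw3; omega
    have hle := nested_le x hpos _ _ hs _ (x ⟨k, by omega⟩) p3
    have hcd := card_lt x hpos (((N ⟨k, by omega⟩).erase ⟨3, by omega⟩).erase ⟨n - 1, by omega⟩)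
      (x ⟨k, by omega⟩)
    set C : ℝ := ((((N ⟨k, by omega⟩).erase ⟨3, by omega⟩).erase ⟨n - 1, by omega⟩).card : ℝ)
    have hqC : 0 < q - C - 2 := by
      by_contra hcon
      nlinarith
    by_contra hcon
    have hlt := sub_pos.mpr (not_le.mp hcon)
    have h5 := mul_pos hqC hlt
    have h6 : x ⟨3, by omega⟩ - x ⟨k, by omega⟩ < x ⟨2, by omega⟩ - x ⟨n - 1, by omega⟩ := by
      nlinarith
    have h7 : (q - 2) * (x ⟨2, by omega⟩ - x ⟨n - 1, by omega⟩) ≤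
        x ⟨3, by omega⟩ - x ⟨k, by omega⟩ := by nlinarith
    nlinarith
  exact final_arith q _ _ _ _ _ _ _ hq p1 pl E0 (by linarith) E2 (by linarith) hd hg
end

section
/- Let n ≥ 3 and let H = K_1 ∇ P_{n−1} be the fan graph on vertices v_0, v_1, …, v_{n−1}, i.e., v_0 is adjacent to every other vertex and v_i is adjacent to v_{i+1} for 1 ≤ i ≤ n−2, with no other edges. Then the Q-index of H satisfies q(H) > n. -/
open Matrix

theorem lt_qIndex_of_dot {V : Type*} [Fintype V] (G : SimpleGraph V) (c : ℝ) (x : V → ℝ)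
    (hx : 0 < x ⬝ᵥ (signlessLaplacian G *ᵥ x - c • x)) : c < qIndex G := by
  classical
  by_contra hcon
  push Not at hcon
  have hfin : (spectrum ℝ (signlessLaplacian G)).Finite := Matrix.finite_real_spectrum
  have hherm : (signlessLaplacian G).IsHermitian := by
    unfold signlessLaplacian
    apply Matrix.IsHermitian.add
    · exact Matrix.isHermitian_diagonal _
    · ext i j
      simp [Matrix.conjTranspose_apply, SimpleGraph.adjMatrix_apply, SimpleGraph.adj_comm]
  have hle : ∀ μ ∈ spectrum ℝ (signlessLaplacian G), μ ≤ c := by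
    intro μ hμ
    refine le_trans ?_ hcon
    unfold qIndex
    convert le_csSup hfin.bddAbove hμ
  have hpsd : (algebraMap ℝ (Matrix V V ℝ) c - signlessLaplacian G).PosSemidef := by
    rw [Matrix.posSemidef_iff_isHermitian_and_spectrum_nonneg]
    refine ⟨?_, ?_⟩
    · apply Matrix.IsHermitian.sub _ hherm
      rw [Matrix.algebraMap_eq_diagonal]
      exact Matrix.isHermitian_diagonal _
    · rw [← spectrum.singleton_sub_eq]
      rintro _ ⟨a, ha, b, hb, rfl⟩
      rw [Set.mem_singleton_iff] at ha
      subst ha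
      exact sub_nonneg.2 (hle b hb)
  have h := hpsd.dotProduct_mulVec_nonneg x
  rw [Matrix.sub_mulVec, Algebra.algebraMap_eq_smul_one, Matrix.smul_mulVec, Matrix.one_mulVec] at h
  simp only [star_trivial, dotProduct_sub] at h hx
  linarith

/-- the fan graph `K_1 ∇ P_{n-1}` on `n ≥ 3` vertices has `Q`-index
greater than `n`. -/
theorem stmt_17 (n : ℕ) (hn : 3 ≤ n) (H : SimpleGraph (Fin n))
    (hadj : ∀ u w : Fin n, H.Adj u w ↔
      u ≠ w ∧ (u.val = 0 ∨ w.val = 0 ∨ u.val + 1 = w.val ∨ w.val + 1 = u.val)) :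
    (n : ℝ) < qIndex H := by
  classical
  let z : Fin n := ⟨0, by omega⟩
  let x : Fin n → ℝ := fun i => 1 + (if i = z then ((n:ℝ) - 2) else 0)
  have hn' : (3:ℝ) ≤ n := by exact_mod_cast hn
  apply lt_qIndex_of_dot H n x
  have hxpos : ∀ i, 0 < x i := by
    intro i
    simp only [x]
    split_ifs <;> linarith
  have hrow : ∀ i, (signlessLaplacian H *ᵥ x - (n:ℝ) • x) i =
      (H.degree i : ℝ) * x i + (H.degree i + if H.Adj i z then ((n:ℝ) - 2) else 0) - n * x i := by
    intro i
    have h1 : signlessLaplacian H =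
        Matrix.diagonal (fun v => (H.degree v : ℝ)) + H.adjMatrix ℝ := by
      unfold signlessLaplacian
      congr!
    rw [h1, Pi.sub_apply, Matrix.add_mulVec, Pi.add_apply, Matrix.mulVec_diagonal,
      SimpleGraph.adjMatrix_mulVec_apply]
    simp [x, Finset.sum_add_distrib]
  have hdz : (n:ℝ) - 1 ≤ H.degree z := by
    have : Finset.univ.erase z ⊆ H.neighborFinset z := by
      intro j hj
      have hj := Finset.ne_of_mem_erase hj
      rw [SimpleGraph.mem_neighborFinset, hadj]
      exact ⟨hj.symm, Or.inl rfl⟩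
    have := Finset.card_le_card this
    rw [Finset.card_erase_of_mem (Finset.mem_univ _), Finset.card_univ, Fintype.card_fin,
      SimpleGraph.card_neighborFinset_eq_degree] at this
    have : n ≤ H.degree z + 1 := by omega
    have : (n:ℝ) ≤ H.degree z + 1 := by exact_mod_cast this
    linarith
  have hdi : ∀ i, i ≠ z → (2:ℝ) ≤ H.degree i := by
    intro i hi
    have hi0 : i.val ≠ 0 := fun h => hi (Fin.ext h)
    have hlt := i.isLt
    obtain ⟨j, hj0, hj⟩ : ∃ j : Fin n, j ≠ z ∧ H.Adj i j := by
      by_cases h : i.val + 1 < n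
      · refine ⟨⟨i.val + 1, h⟩, ?_, ?_⟩
        · simp [z]
        · rw [hadj]; simp [Fin.ext_iff]
      · refine ⟨⟨i.val - 1, by omega⟩, ?_, ?_⟩
        · simp only [z, ne_eq, Fin.mk.injEq]; omega
        · rw [hadj]; simp only [ne_eq, Fin.ext_iff]; omega
    have : ({z, j} : Finset (Fin n)) ⊆ H.neighborFinset i := by
      intro k hk
      rw [SimpleGraph.mem_neighborFinset]
      rcases Finset.mem_insert.1 hk with rfl | hk
      · rw [hadj]; exact ⟨hi, Or.inr (Or.inl rfl)⟩
      · rw [Finset.mem_singleton.1 hk]; exact hj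
    have := Finset.card_le_card this
    rw [Finset.card_pair hj0.symm, SimpleGraph.card_neighborFinset_eq_degree] at this
    exact_mod_cast this
  have hpos : ∀ i, i ≠ z → 0 < (signlessLaplacian H *ᵥ x - (n:ℝ) • x) i := by
    intro i hi
    have ha : H.Adj i z := by rw [hadj]; exact ⟨hi, Or.inr (Or.inl rfl)⟩
    have := hdi i hi
    rw [hrow]
    simp only [x, if_neg hi, if_pos ha]
    linarith
  have hz : 0 ≤ (signlessLaplacian H *ᵥ x - (n:ℝ) • x) z := by
    rw [hrow]
    simp only [x, SimpleGraph.irrefl, if_true, if_false]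
    nlinarith
  apply Finset.sum_pos'
  · intro i _
    by_cases h : i = z
    · rw [h]; exact mul_nonneg (hxpos z).le hz
    · exact mul_nonneg (hxpos i).le (hpos i h).le
  · refine ⟨⟨1, by omega⟩, Finset.mem_univ _, mul_pos (hxpos _) (hpos _ ?_)⟩
    simp [z]
end
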